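/- arXiv:0907.1020 — 2 statements merged into one kernel-verified Lean document; each statement's English description precedes it below -/
import Mathlib

section
/- Under Assumptions 1.1, 1.2 and 1.3, almost surely on the event Λ = {sup_{n≥0} ‖θ_n‖ < ∞} the limit θ̂ = lim_{n→∞} θ_n exists and satisfies ∇f(θ̂) = 0. -/
open MeasureTheory Filter

/-!
Cut the indices into blocks over which the step sizes add up to about `τ`, where `τ` is small
compared with the inverse Lipschitz constant of `∇ f`. Over the `j`-th block the recursion acts
like a single gradient step of length `τ`: it decreases `f` by a multiple of `‖∇ f‖ ^ 2`, up to a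
multiple of `ε_j ^ 2`, where `ε_j` bounds the accumulated noise of the block. Summation by parts
against the weights `γ_i ^ r` shows that `ε_j = O(j ^ (-r))`, which is summable.

The Łojasiewicz inequality turns the decrease of `f` into summability of the gradient norms,
because a power of `f - b` decreases by at least a multiple of `‖∇ f‖`, where `b` is the limit of
`f` along the blocks. This fails once `f - b` drops below the remaining noise, a multiple `R_j` of
`∑_{i ≥ j} ε_i ^ 2`; there the potential `min (f - b - R_j) 0 / ε_j` takes over. Hence the
trajectory has finite length along the blocks.
-/

open scoped Gradient NNReal RealInnerProductSpace Topology

/-! ### Sequences decreasing up to a summable error -/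

theorem exists_tendsto_of_le_add_summable {u e : ℕ → ℝ} (hu : ∀ j, u (j + 1) ≤ u j + e j)
    (he : Summable e) (hbdd : BddBelow (Set.range u)) : ∃ l, Tendsto u atTop (𝓝 l) := by
  have hsum := he.hasSum.tendsto_sum_nat
  have hanti : Antitone fun j ↦ u j - ∑ i ∈ Finset.range j, e i :=
    antitone_nat_of_succ_le fun j ↦ by rw [Finset.sum_range_succ]; linarith [hu j]
  have hbelow : BddBelow (Set.range fun j ↦ u j - ∑ i ∈ Finset.range j, e i) := by
    obtain ⟨B, hB⟩ := hbdd
    obtain ⟨S, hS⟩ := hsum.bddAbove_range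
    exact ⟨B - S, Set.forall_mem_range.2 fun j ↦ sub_le_sub (hB ⟨j, rfl⟩) (hS ⟨j, rfl⟩)⟩
  exact ⟨_, by simpa using (tendsto_atTop_ciInf hanti hbelow).add hsum⟩

theorem summable_of_le_sub_add {g Φ e : ℕ → ℝ} (hg : ∀ j, 0 ≤ g j)
    (h : ∀ j, g j ≤ Φ j - Φ (j + 1) + e j) (he : Summable e) (hΦ : BddBelow (Set.range Φ)) :
    Summable g := by
  obtain ⟨B, hB⟩ := hΦ
  obtain ⟨S, hS⟩ := he.hasSum.tendsto_sum_nat.bddAbove_range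
  refine summable_of_sum_range_le (c := Φ 0 - B + S) hg fun n ↦ ?_
  calc ∑ j ∈ Finset.range n, g j
      ≤ ∑ j ∈ Finset.range n, (Φ j - Φ (j + 1) + e j) := Finset.sum_le_sum fun j _ ↦ h j
    _ = Φ 0 - Φ n + ∑ j ∈ Finset.range n, e j := by
      rw [Finset.sum_add_distrib, Finset.sum_range_sub']
    _ ≤ Φ 0 - B + S := by gcongr; exacts [hB ⟨n, rfl⟩, hS ⟨n, rfl⟩]

/-- The tail `∑_{i ≥ j} ε_i ^ 2`: the total increase that errors of size `ε_i ^ 2` can still cause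
from time `j` on. -/
noncomputable def squareTail (ε : ℕ → ℝ) (j : ℕ) : ℝ := ∑' i, ε (i + j) ^ 2

section SquareTail

variable {ε : ℕ → ℝ}

theorem squareTail_nonneg (ε : ℕ → ℝ) (j : ℕ) : 0 ≤ squareTail ε j :=
  tsum_nonneg fun _ ↦ sq_nonneg _

theorem squareTail_eq_sq_add (h : Summable fun j ↦ ε j ^ 2) (j : ℕ) :
    squareTail ε j = ε j ^ 2 + squareTail ε (j + 1) := by
  rw [squareTail, ((summable_nat_add_iff j).2 h).tsum_eq_zero_add]
  simp only [zero_add, squareTail, add_assoc, add_comm 1]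

theorem tendsto_squareTail (ε : ℕ → ℝ) : Tendsto (squareTail ε) atTop (𝓝 0) :=
  tendsto_sum_nat_add fun i ↦ ε i ^ 2

variable (hε : ∀ j, 0 ≤ ε j) (hanti : Antitone ε) (hsum : Summable ε)
include hε hanti hsum

theorem summable_sq_of_antitone : Summable fun j ↦ ε j ^ 2 :=
  (hsum.mul_left (ε 0)).of_nonneg_of_le (fun _ ↦ sq_nonneg _) fun j ↦ by
    rw [sq]
    exact mul_le_mul_of_nonneg_right (hanti j.zero_le) (hε j)

theorem squareTail_le_tsum_mul (j : ℕ) : squareTail ε j ≤ (∑' i, ε i) * ε j := by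
  rw [squareTail, ← tsum_mul_right]
  refine Summable.tsum_le_tsum (fun i ↦ ?_)
    ((summable_nat_add_iff j).2 (summable_sq_of_antitone hε hanti hsum)) (hsum.mul_right _)
  rw [sq]
  exact mul_le_mul (hanti (Nat.le_add_right i j)) (hanti (Nat.le_add_left j i)) (hε _) (hε _)

end SquareTail

/-! ### Summability from the Łojasiewicz inequality -/

theorem mul_rpow_sub_one_mul_sub_le_rpow_sub_rpow {p x y : ℝ} (hp₀ : 0 ≤ p) (hp₁ : p ≤ 1)
    (hx : 0 < x) (hy : 0 ≤ y) : p * x ^ (p - 1) * (x - y) ≤ x ^ p - y ^ p := by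
  have bernoulli : (y / x) ^ p ≤ 1 + p * (y / x - 1) := by
    simpa using rpow_one_add_le_one_add_mul_self (s := y / x - 1)
      (by linarith [div_nonneg hy hx.le]) hp₀ hp₁
  rw [Real.div_rpow hy hx.le, div_le_iff₀ (by positivity)] at bernoulli
  have : p * (x ^ p / x) * (x - y) = x ^ p - (1 + p * (y / x - 1)) * x ^ p := by
    field_simp; ring
  rw [Real.rpow_sub_one hx.ne']
  linarith

theorem le_mul_rpow_sub_rpow_of_le_mul_rpow {c M μ g w w' : ℝ} (hc : 0 < c) (hμ : 1 < μ)
    (hg : 0 ≤ g) (hw : 0 < w) (hw' : 0 ≤ w') (hdesc : c * g ^ 2 ≤ w - w')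
    (hLoj : w ≤ M * g ^ μ) :
    g ≤ M ^ μ⁻¹ / ((1 - μ⁻¹) * c) * (w ^ (1 - μ⁻¹) - w' ^ (1 - μ⁻¹)) := by
  have hμ₀ : 0 < μ := by linarith
  have hM : 0 < M := pos_of_mul_pos_left (hw.trans_le hLoj) (by positivity)
  have hg : 0 < g := by
    refine hg.lt_of_ne fun h ↦ ?_
    rw [← h, Real.zero_rpow hμ₀.ne'] at hLoj
    linarith
  have hp : 0 < 1 - μ⁻¹ := sub_pos.2 (inv_lt_one_of_one_lt₀ hμ)
  have hroot : w ^ μ⁻¹ ≤ M ^ μ⁻¹ * g := calc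
    w ^ μ⁻¹ ≤ (M * g ^ μ) ^ μ⁻¹ := by gcongr
    _ = M ^ μ⁻¹ * g := by
      rw [Real.mul_rpow hM.le (by positivity), Real.rpow_rpow_inv hg.le hμ₀.ne']
  have htangent : (1 - μ⁻¹) * (M ^ μ⁻¹ * g)⁻¹ * (c * g ^ 2) ≤
      w ^ (1 - μ⁻¹) - w' ^ (1 - μ⁻¹) := calc
    _ ≤ (1 - μ⁻¹) * w ^ (1 - μ⁻¹ - 1) * (w - w') := by
      rw [sub_sub_cancel_left, Real.rpow_neg hw.le]
      gcongr
    _ ≤ _ := mul_rpow_sub_one_mul_sub_le_rpow_sub_rpow hp.le (sub_le_self _ (by positivity)) hw hw'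
  calc g = M ^ μ⁻¹ / ((1 - μ⁻¹) * c) * ((1 - μ⁻¹) * (M ^ μ⁻¹ * g)⁻¹ * (c * g ^ 2)) := by
        generalize 1 - μ⁻¹ = p at hp
        field_simp
    _ ≤ _ := by gcongr

theorem le_min_zero_div_sub_min_zero_div {A c g u u' ε ε' : ℝ} (hc : 0 < c) (hε' : 0 < ε')
    (hle : ε' ≤ ε) (hu : u ≤ 0) (hdesc : c * g ^ 2 ≤ u - u' + A * ε ^ 2) :
    g ≤ (min u 0 / ε - min u' 0 / ε') / c + (1 + A / c) * ε := by
  have hε : 0 < ε := hε'.trans_le hle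
  have hyoung : g ≤ g ^ 2 / ε + ε := by
    rw [← sub_nonneg, show g ^ 2 / ε + ε - g = ((g - ε / 2) ^ 2 + 3 / 4 * ε ^ 2) / ε by
      field_simp; ring]
    positivity
  have hnext : min u' 0 / ε' ≤ u' / ε := calc
    min u' 0 / ε' ≤ min u' 0 / ε := by
      rw [div_eq_mul_inv, div_eq_mul_inv]
      exact mul_le_mul_of_nonpos_left (inv_anti₀ hε' hle) (min_le_right _ _)
    _ ≤ u' / ε := by gcongr; exact min_le_left _ _
  calc g ≤ c * g ^ 2 / ε / c + ε := by rwa [mul_div_assoc, mul_div_cancel_left₀ _ hc.ne']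
    _ ≤ (u - u' + A * ε ^ 2) / ε / c + ε := by gcongr
    _ = (u / ε - u' / ε) / c + (1 + A / c) * ε := by field_simp; ring
    _ ≤ _ := by rw [min_eq_left hu]; gcongr

/-- A Lyapunov function for inexact descent `v' ≤ v - c * g ^ 2 + error` under the Łojasiewicz
inequality `v ≤ M * g ^ μ`, where `R` bounds all future errors and `ε` is the current noise level.
While `R < v`, the inequality makes the first summand decrease by at least `g`; once `v ≤ R` it
carries no information, and the second summand takes over. -/
noncomputable def lojasiewiczPotential (c M μ v R ε : ℝ) : ℝ :=
  (2 * M) ^ μ⁻¹ / ((1 - μ⁻¹) * c) * (v + R) ^ (1 - μ⁻¹) + min (v - R) 0 / ε / c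

section LojasiewiczPotential

variable {c K M μ g v v' R R' ε ε' : ℝ}

theorem le_lojasiewiczPotential_sub (hc : 0 < c) (hK : 0 ≤ K) (hM : 0 ≤ M) (hμ : 1 < μ)
    (hg : 0 ≤ g) (hε' : 0 < ε') (hle : ε' ≤ ε) (hR : 0 ≤ R) (hvR' : 0 ≤ v' + R')
    (hRR' : R = K * ε ^ 2 + R') (hdesc : v' ≤ v - c * g ^ 2 + K * ε ^ 2)
    (hLoj : v ≤ M * g ^ μ) :
    g ≤ lojasiewiczPotential c M μ v R ε - lojasiewiczPotential c M μ v' R' ε'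
      + (1 + 2 * K / c) * ε := by
  have hε : 0 < ε := hε'.trans_le hle
  have hdescR : c * g ^ 2 ≤ v + R - (v' + R') := by linarith
  rw [lojasiewiczPotential, lojasiewiczPotential]
  rcases lt_or_ge R v with h | h
  · have hpow := le_mul_rpow_sub_rpow_of_le_mul_rpow (M := 2 * M) hc hμ hg
      (by linarith) hvR' hdescR (by linarith)
    have hmin : min (v' - R') 0 / ε' / c ≤ 0 :=
      div_nonpos_of_nonpos_of_nonneg
        (div_nonpos_of_nonpos_of_nonneg (min_le_right _ _) hε'.le) hc.le
    have herr : 0 ≤ (1 + 2 * K / c) * ε := by positivity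
    rw [min_eq_right (sub_nonneg.2 h.le), zero_div, zero_div]
    linarith
  · have hmin := le_min_zero_div_sub_min_zero_div (A := 2 * K) (g := g) (u := v - R)
      (u' := v' - R') hc hε' hle (sub_nonpos.2 h) (by linarith)
    have hp : 0 < 1 - μ⁻¹ := sub_pos.2 (inv_lt_one_of_one_lt₀ hμ)
    have hpow : (2 * M) ^ μ⁻¹ / ((1 - μ⁻¹) * c) * (v' + R') ^ (1 - μ⁻¹) ≤
        (2 * M) ^ μ⁻¹ / ((1 - μ⁻¹) * c) * (v + R) ^ (1 - μ⁻¹) :=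
      have hdecr : v' + R' ≤ v + R := by linarith [mul_nonneg hc.le (sq_nonneg g)]
      mul_le_mul_of_nonneg_left (Real.rpow_le_rpow hvR' hdecr hp.le) (by positivity)
    rw [sub_div] at hmin
    linarith

theorem neg_div_le_lojasiewiczPotential {B : ℝ} (hc : 0 < c) (hM : 0 ≤ M) (hμ : 1 < μ)
    (hε : 0 < ε) (hR : 0 ≤ R) (hvR : 0 ≤ v + R) (hRB : R ≤ B * ε) :
    -(2 * B) / c ≤ lojasiewiczPotential c M μ v R ε := by
  have hp : 0 < 1 - μ⁻¹ := sub_pos.2 (inv_lt_one_of_one_lt₀ hμ)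
  have hpow : 0 ≤ (2 * M) ^ μ⁻¹ / ((1 - μ⁻¹) * c) * (v + R) ^ (1 - μ⁻¹) := by positivity
  have hmin : -(2 * B) ≤ min (v - R) 0 / ε := by
    rw [le_div_iff₀ hε]
    exact le_min (by linarith) (by linarith)
  exact (div_le_div_of_nonneg_right hmin hc.le).trans (le_add_of_nonneg_left hpow)

end LojasiewiczPotential

theorem summable_of_lojasiewicz_descent {v g ε : ℕ → ℝ} {c K M μ : ℝ} (hc : 0 < c) (hK : 0 ≤ K)
    (hM : 0 ≤ M) (hμ : 1 < μ) (hε : ∀ j, 0 < ε j) (hanti : Antitone ε) (hsum : Summable ε)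
    (hg : ∀ j, 0 ≤ g j) (hv : Tendsto v atTop (𝓝 0))
    (hdesc : ∀ j, v (j + 1) ≤ v j - c * g j ^ 2 + K * ε j ^ 2)
    (hLoj : ∀ j, v j ≤ M * g j ^ μ) : Summable g := by
  have hε₀ : ∀ j, 0 ≤ ε j := fun j ↦ (hε j).le
  let R : ℕ → ℝ := fun j ↦ K * squareTail ε j
  have hR₀ : ∀ j, 0 ≤ R j := fun j ↦ mul_nonneg hK (squareTail_nonneg ε j)
  have hR_succ : ∀ j, R j = K * ε j ^ 2 + R (j + 1) := fun j ↦ by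
    simp only [R]
    rw [squareTail_eq_sq_add (summable_sq_of_antitone hε₀ hanti hsum), mul_add]
  have hR_le : ∀ j, R j ≤ K * (∑' i, ε i) * ε j := fun j ↦ by
    rw [mul_assoc]
    exact mul_le_mul_of_nonneg_left (squareTail_le_tsum_mul hε₀ hanti hsum j) hK
  have hvR_anti : Antitone fun j ↦ v j + R j := antitone_nat_of_succ_le fun j ↦ by
    linarith [hdesc j, hR_succ j, mul_nonneg hc.le (sq_nonneg (g j))]
  have hvR₀ : ∀ j, 0 ≤ v j + R j :=
    hvR_anti.le_of_tendsto (by simpa [R] using hv.add ((tendsto_squareTail ε).const_mul K))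
  exact summable_of_le_sub_add (Φ := fun j ↦ lojasiewiczPotential c M μ (v j) (R j) (ε j)) hg
    (fun j ↦ le_lojasiewiczPotential_sub hc hK hM hμ (hg j) (hε _) (hanti j.le_succ) (hR₀ j)
      (hvR₀ _) (hR_succ j) (hdesc j) (hLoj j))
    (hsum.mul_left _)
    ⟨_, Set.forall_mem_range.2 fun j ↦
      neg_div_le_lojasiewiczPotential hc hM hμ (hε j) (hR₀ j) (hvR₀ j) (hR_le j)⟩

/-! ### Summation by parts and blocks -/

theorem norm_sum_Ico_smul_le_of_antitone {E : Type*} [SeminormedAddCommGroup E] [NormedSpace ℝ E]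
    {b : ℕ → ℝ} {z : ℕ → E} {C : ℝ} {n m : ℕ} (hnm : n ≤ m) (hb : AntitoneOn b (Set.Icc n m))
    (hbm : 0 ≤ b m) (hz : ∀ k ∈ Set.Icc n m, ‖∑ i ∈ Finset.Ico n k, z i‖ ≤ C) :
    ‖∑ i ∈ Finset.Ico n m, b i • z i‖ ≤ C * b n := by
  have abel : ∀ k, n ≤ k → k ≤ m →
      ‖∑ i ∈ Finset.Ico n k, b i • z i - b k • ∑ i ∈ Finset.Ico n k, z i‖ ≤ C * (b n - b k) := by
    intro k hnk
    induction k, hnk using Nat.le_induction with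
    | base => simp
    | succ k hnk ih =>
      intro hkm
      have hdecr : 0 ≤ b k - b (k + 1) :=
        sub_nonneg.2 (hb ⟨hnk, k.le_succ.trans hkm⟩ ⟨hnk.trans k.le_succ, hkm⟩ k.le_succ)
      calc ‖∑ i ∈ Finset.Ico n (k + 1), b i • z i - b (k + 1) • ∑ i ∈ Finset.Ico n (k + 1), z i‖
          = ‖(∑ i ∈ Finset.Ico n k, b i • z i - b k • ∑ i ∈ Finset.Ico n k, z i)
              + (b k - b (k + 1)) • ∑ i ∈ Finset.Ico n (k + 1), z i‖ := by
            rw [Finset.sum_Ico_succ_top hnk, Finset.sum_Ico_succ_top hnk]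
            congr 1
            module
        _ ≤ C * (b n - b k) + (b k - b (k + 1)) * C := by
            refine norm_add_le_of_le (ih (k.le_succ.trans hkm)) ?_
            rw [norm_smul, Real.norm_of_nonneg hdecr]
            exact mul_le_mul_of_nonneg_left (hz _ ⟨hnk.trans k.le_succ, hkm⟩) hdecr
        _ = C * (b n - b (k + 1)) := by ring
  have hlast : ‖b m • ∑ i ∈ Finset.Ico n m, z i‖ ≤ b m * C := by
    rw [norm_smul, Real.norm_of_nonneg hbm]
    exact mul_le_mul_of_nonneg_left (hz m ⟨hnm, le_rfl⟩) hbm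
  calc ‖∑ i ∈ Finset.Ico n m, b i • z i‖
      ≤ ‖∑ i ∈ Finset.Ico n m, b i • z i - b m • ∑ i ∈ Finset.Ico n m, z i‖
        + ‖b m • ∑ i ∈ Finset.Ico n m, z i‖ := norm_le_norm_sub_add _ _
    _ ≤ C * (b n - b m) + b m * C := add_le_add (abel m hnm le_rfl) hlast
    _ = C * b n := by ring

theorem norm_sum_Ico_smul_le_mul_rpow_neg {E : Type*} [SeminormedAddCommGroup E] [NormedSpace ℝ E]
    {α γ : ℕ → ℝ} {ξ : ℕ → E} {r C : ℝ} {n m : ℕ} (hnm : n ≤ m) (hr : 0 ≤ r) (hγ : Monotone γ)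
    (hγn : 0 < γ n)
    (hξ : ∀ k ∈ Set.Icc n m, ‖∑ i ∈ Finset.Ico n k, (α i * γ i ^ r) • ξ i‖ ≤ C) :
    ‖∑ i ∈ Finset.Ico n m, α i • ξ i‖ ≤ C * γ n ^ (-r) := by
  have hγpos : ∀ i, n ≤ i → 0 < γ i := fun i hi ↦ hγn.trans_le (hγ hi)
  have hunweight : ∀ i ∈ Finset.Ico n m, α i • ξ i = γ i ^ (-r) • (α i * γ i ^ r) • ξ i := by
    intro i hi
    have hγi := hγpos i (Finset.mem_Ico.1 hi).1
    rw [smul_smul, mul_left_comm, ← Real.rpow_add hγi, neg_add_cancel, Real.rpow_zero, mul_one]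
  rw [Finset.sum_congr rfl hunweight]
  exact norm_sum_Ico_smul_le_of_antitone hnm
    (fun i hi j _ hij ↦ Real.rpow_le_rpow_of_nonpos (hγpos i hi.1) (hγ hij) (neg_nonpos.2 hr))
    (Real.rpow_nonneg (hγpos m hnm).le _) hξ

theorem eventually_exists_mem_Icc_add {γ : ℕ → ℝ} (hγ : Tendsto γ atTop atTop)
    (hstep : Tendsto (fun n ↦ γ (n + 1) - γ n) atTop (𝓝 0)) {s : ℝ} (hs : 0 < s) :
    ∀ᶠ c in atTop, ∃ n, γ n ∈ Set.Icc c (c + s) := by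
  obtain ⟨N, hN⟩ := eventually_atTop.1 (hstep.eventually (gt_mem_nhds hs))
  filter_upwards [eventually_gt_atTop (γ N)] with c hc
  classical
  have hreach : ∃ k, c ≤ γ (N + k) :=
    ((tendsto_add_atTop_iff_nat N).2 hγ |>.eventually_ge_atTop c).exists.imp fun k ↦ by
      rw [add_comm]; exact id
  obtain ⟨k, hk⟩ : ∃ k, Nat.find hreach = k + 1 :=
    Nat.exists_eq_succ_of_ne_zero fun h ↦ hc.not_ge (by simpa [h] using Nat.find_spec hreach)
  have hlt : γ (N + k) < c := not_le.1 (Nat.find_min hreach (hk ▸ k.lt_succ_self))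
  have hle : c ≤ γ (N + (k + 1)) := hk ▸ Nat.find_spec hreach
  have hstep_lt : γ (N + (k + 1)) - γ (N + k) < s := hN (N + k) (Nat.le_add_right N k)
  exact ⟨N + (k + 1), hle, by linarith⟩

theorem exists_strictMono_sub_mem_Icc {γ : ℕ → ℝ} (hmono : Monotone γ)
    (hγ : Tendsto γ atTop atTop) (hstep : Tendsto (fun n ↦ γ (n + 1) - γ n) atTop (𝓝 0))
    {τ : ℝ} (hτ : 0 < τ) (c₀ : ℝ) :
    ∃ ν : ℕ → ℕ, StrictMono ν ∧ (∀ j : ℕ, c₀ + j * (τ / 2) ≤ γ (ν j)) ∧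
      ∀ j, γ (ν (j + 1)) - γ (ν j) ∈ Set.Icc (τ / 2) τ := by
  obtain ⟨c, hc, hreach⟩ := (eventually_ge_atTop c₀).and (eventually_forall_ge_atTop.2
    (eventually_exists_mem_Icc_add hγ hstep (s := τ / 4) (by linarith))) |>.exists
  choose ν hν using fun j : ℕ ↦
    hreach (c + j * (3 * τ / 4)) (le_add_of_nonneg_right (by positivity))
  have hincr : ∀ j, γ (ν (j + 1)) - γ (ν j) ∈ Set.Icc (τ / 2) τ := fun j ↦ by
    obtain ⟨hlo, hhi⟩ := hν j
    obtain ⟨hlo', hhi'⟩ := hν (j + 1)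
    push_cast at hlo' hhi'
    constructor <;> linarith
  refine ⟨ν, strictMono_nat_of_lt_succ fun j ↦ ?_, fun j ↦ ?_, hincr⟩
  · exact hmono.reflect_lt (by linarith [(hincr j).1])
  · have : (0 : ℝ) ≤ j * τ := by positivity
    linarith [(hν j).1]

theorem exists_tendsto_of_summable_block_dist {X : Type*} [PseudoMetricSpace X] [CompleteSpace X]
    {u : ℕ → X} {ν : ℕ → ℕ} {D : ℕ → ℝ} (hν : StrictMono ν) (hD : Summable D)
    (hu : ∀ j, ∀ k ∈ Set.Icc (ν j) (ν (j + 1)), dist (u k) (u (ν j)) ≤ D j) :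
    ∃ l, Tendsto u atTop (𝓝 l) := by
  have hcauchy : CauchySeq (u ∘ ν) := cauchySeq_of_dist_le_of_summable D
    (fun j ↦ by rw [dist_comm]; exact hu j _ ⟨(hν j.lt_succ_self).le, le_rfl⟩) hD
  obtain ⟨l, hl⟩ := cauchySeq_tendsto_of_complete hcauchy
  refine ⟨l, Metric.tendsto_atTop.2 fun η hη ↦ ?_⟩
  obtain ⟨J, hJ⟩ := eventually_atTop.1 <|
    (Metric.tendsto_nhds.1 hl (η / 2) (half_pos hη)).and
      (hD.tendsto_atTop_zero.eventually (gt_mem_nhds (half_pos hη)))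
  have hblock : ∀ n, ν J ≤ n → ∃ j ≥ J, n ∈ Set.Ico (ν j) (ν (j + 1)) := by
    intro n hn
    induction n, hn using Nat.le_induction with
    | base => exact ⟨J, le_rfl, le_rfl, hν J.lt_succ_self⟩
    | succ n _ ih =>
      obtain ⟨j, hj, hnj, hnj'⟩ := ih
      rcases (Nat.succ_le_of_lt hnj').lt_or_eq with h | h
      · exact ⟨j, hj, hnj.trans n.le_succ, h⟩
      · exact ⟨j + 1, hj.trans j.le_succ, h.ge, h.trans_lt (hν (j + 1).lt_succ_self)⟩
  refine ⟨ν J, fun n hn ↦ ?_⟩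
  obtain ⟨j, hj, hnj, hnj'⟩ := hblock n hn
  calc dist (u n) l ≤ dist (u n) (u (ν j)) + dist (u (ν j)) l := dist_triangle _ _ _
    _ ≤ D j + dist (u (ν j)) l := by gcongr; exact hu j n ⟨hnj, hnj'.le⟩
    _ < η / 2 + η / 2 := add_lt_add (hJ j hj).2 (hJ j hj).1
    _ = η := add_halves η

theorem summable_add_mul_rpow_neg {a b r : ℝ} (ha : 0 < a) (hb : 0 ≤ b) (hr : 1 < r) :
    Summable fun j : ℕ ↦ (b + j * a) ^ (-r) := by
  have h := ((Real.summable_one_div_nat_add_rpow (b / a) r).2 hr).mul_left (a ^ (-r))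
  refine h.congr fun j ↦ ?_
  have hpos : 0 ≤ j + b / a := by positivity
  rw [abs_of_nonneg hpos, one_div, ← Real.rpow_neg hpos, ← Real.mul_rpow ha.le hpos]
  congr 1
  field_simp
  ring

theorem exists_strictMono_block_noise_le {E : Type*} [SeminormedAddCommGroup E] [NormedSpace ℝ E]
    {α γ : ℕ → ℝ} {ξ : ℕ → E} {r t C τ : ℝ} (hmono : Monotone γ) (hγ : Tendsto γ atTop atTop)
    (hstep : Tendsto (fun n ↦ γ (n + 1) - γ n) atTop (𝓝 0)) (hτ : 0 < τ) (hτt : τ ≤ t)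
    (hr : 1 < r) (hξ : ∀ᶠ n in atTop, ∀ m ≥ n, γ m - γ n ≤ t →
      ‖∑ i ∈ Finset.Ico n m, (α i * γ i ^ r) • ξ i‖ ≤ C) :
    ∃ (ν : ℕ → ℕ) (ε : ℕ → ℝ), StrictMono ν ∧
      (∀ j, γ (ν (j + 1)) - γ (ν j) ∈ Set.Icc (τ / 2) τ) ∧
      (∀ j, 0 < ε j) ∧ Antitone ε ∧ Summable ε ∧
      ∀ j, ∀ k ∈ Set.Icc (ν j) (ν (j + 1)), ‖∑ i ∈ Finset.Ico (ν j) k, α i • ξ i‖ ≤ ε j := by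
  obtain ⟨N, hN⟩ := eventually_atTop.1 hξ
  obtain ⟨ν, hν, hγν, hblock⟩ := exists_strictMono_sub_mem_Icc hmono hγ hstep hτ (|γ N| + 1)
  have hbase : ∀ j : ℕ, 0 < |γ N| + 1 + j * (τ / 2) := fun j ↦ by positivity
  refine ⟨ν, fun j ↦ max C 1 * (|γ N| + 1 + j * (τ / 2)) ^ (-r), hν, hblock,
    fun j ↦ mul_pos (by positivity) (Real.rpow_pos_of_pos (hbase j) _), fun i j hij ↦ ?_,
    (summable_add_mul_rpow_neg (half_pos hτ) (by positivity) hr).mul_left _, fun j k hk ↦ ?_⟩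
  · refine mul_le_mul_of_nonneg_left
      (Real.rpow_le_rpow_of_nonpos (hbase i) ?_ (by linarith)) (by positivity)
    gcongr
  · have hνN : γ N < γ (ν j) := by
      linarith [hγν j, le_abs_self (γ N), show (0 : ℝ) ≤ j * (τ / 2) by positivity]
    have hweighted : ∀ k' ∈ Set.Icc (ν j) k,
        ‖∑ i ∈ Finset.Ico (ν j) k', (α i * γ i ^ r) • ξ i‖ ≤ max C 1 := fun k' hk' ↦
      (hN _ (hmono.reflect_lt hνN).le k' hk'.1 <|
        (sub_le_sub_right (hmono (hk'.2.trans hk.2)) _).trans ((hblock j).2.trans hτt)).trans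
      (le_max_left _ _)
    calc ‖∑ i ∈ Finset.Ico (ν j) k, α i • ξ i‖
        ≤ max C 1 * γ (ν j) ^ (-r) := norm_sum_Ico_smul_le_mul_rpow_neg hk.1 (by linarith) hmono
          ((hbase j).trans_le (hγν j)) hweighted
      _ ≤ max C 1 * (|γ N| + 1 + j * (τ / 2)) ^ (-r) := mul_le_mul_of_nonneg_left
          (Real.rpow_le_rpow_of_nonpos (hbase j) (hγν j) (by linarith)) (by positivity)

theorem le_biSup_of_finite {ι : Type*} {s : Set ι} (hs : s.Finite) (g : ι → ℝ) {i : ι}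
    (hi : i ∈ s) : g i ≤ ⨆ i ∈ s, g i := by
  obtain ⟨B, hB⟩ := (hs.image g).bddAbove
  have hbdd : BddAbove (Set.range fun i ↦ ⨆ _ : i ∈ s, g i) :=
    ⟨max B 0, Set.forall_mem_range.2 fun j ↦
      Real.iSup_le (fun hj ↦ (hB ⟨j, hj, rfl⟩).trans (le_max_left _ _)) (le_max_right _ _)⟩
  exact (ciSup_pos (f := fun _ ↦ g i) hi).ge.trans (le_ciSup hbdd i)

theorem exists_eventually_norm_sum_Ico_le {E : Type*} [SeminormedAddCommGroup E] {γ : ℕ → ℝ}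
    {z : ℕ → E} {t : ℝ} (hγ : Tendsto γ atTop atTop)
    (hz : IsBoundedUnder (· ≤ ·) atTop fun n ↦
      ⨆ k ∈ Set.Ico n (sSup {k | n ≤ k ∧ γ k - γ n ≤ t}), ‖∑ i ∈ Finset.Icc n k, z i‖) :
    ∃ C, ∀ᶠ n in atTop, ∀ m ≥ n, γ m - γ n ≤ t → ‖∑ i ∈ Finset.Ico n m, z i‖ ≤ C := by
  obtain ⟨C, hC⟩ := hz
  refine ⟨max C 0, (eventually_map.1 hC).mono fun n hn m hnm hm ↦ ?_⟩
  have hbdd : BddAbove {k | n ≤ k ∧ γ k - γ n ≤ t} := by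
    obtain ⟨N, hN⟩ := eventually_atTop.1 (hγ.eventually_gt_atTop (γ n + t))
    refine ⟨N, fun k hk ↦ le_of_not_ge fun hNk ↦ ?_⟩
    linarith [hN k hNk, hk.2]
  rcases hnm.eq_or_lt with rfl | hlt
  · simp
  obtain ⟨k, rfl⟩ := Nat.exists_eq_add_one_of_ne_zero hlt.ne_bot
  have hk : k ∈ Set.Ico n (sSup {k | n ≤ k ∧ γ k - γ n ≤ t}) :=
    ⟨Nat.le_of_lt_succ hlt, Nat.lt_of_succ_le (le_csSup hbdd ⟨hnm, hm⟩)⟩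
  calc ‖∑ i ∈ Finset.Ico n (k + 1), z i‖ = ‖∑ i ∈ Finset.Icc n k, z i‖ := by
        rw [← Finset.Ico_add_one_right_eq_Icc]
    _ ≤ C := (le_biSup_of_finite (Set.finite_Ico _ _) _ hk).trans hn
    _ ≤ max C 0 := le_max_left _ _

/-! ### Gradient descent with noise in a Hilbert space -/

section Hilbert

variable {E : Type*} [NormedAddCommGroup E] [InnerProductSpace ℝ E] [CompleteSpace E]
  {f : E → ℝ} {s : Set E}

theorem le_add_inner_gradient_add_of_lipschitzOnWith {K : ℝ≥0} {x y : E} (hs : Convex ℝ s)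
    (hf : ∀ z ∈ s, DifferentiableAt ℝ f z) (hK : LipschitzOnWith K (∇ f) s) (hx : x ∈ s)
    (hy : y ∈ s) : f y ≤ f x + ⟪∇ f x, y - x⟫ + K / 2 * ‖y - x‖ ^ 2 := by
  let φ : ℝ → E := fun t ↦ AffineMap.lineMap (k := ℝ) x y t
  have hφs : ∀ t ∈ Set.Icc (0 : ℝ) 1, φ t ∈ s := fun t ht ↦ hs.lineMap_mem hx hy ht
  have hφ_sub : ∀ t, φ t - x = t • (y - x) := fun t ↦ by simp [φ, AffineMap.lineMap_apply]
  have hderiv : ∀ t ∈ Set.Icc (0 : ℝ) 1,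
      HasDerivAt (fun t ↦ f (φ t)) ⟪∇ f (φ t), y - x⟫ t := fun t ht ↦
    (hf _ (hφs t ht)).hasGradientAt.hasFDerivAt.comp_hasDerivAt t AffineMap.hasDerivAt_lineMap
  have hbound : ∀ t ∈ Set.Icc (0 : ℝ) 1,
      ⟪∇ f (φ t), y - x⟫ ≤ ⟪∇ f x, y - x⟫ + K * t * ‖y - x‖ ^ 2 := fun t ht ↦ by
    have hlip : ‖∇ f (φ t) - ∇ f x‖ ≤ K * (t * ‖y - x‖) := by
      simpa [hφ_sub, norm_smul, Real.norm_of_nonneg ht.1] using hK.norm_sub_le (hφs t ht) hx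
    have hinner := (real_inner_le_norm _ _).trans
      (mul_le_mul_of_nonneg_right hlip (norm_nonneg (y - x)))
    rw [inner_sub_left] at hinner
    linarith
  have hcompare := image_le_of_deriv_right_le_deriv_boundary
    (f := fun t ↦ f (φ t)) (a := 0) (b := 1)
    (B := fun t ↦ f x + ⟪∇ f x, y - x⟫ * t + K * ‖y - x‖ ^ 2 / 2 * t ^ 2)
    (B' := fun t ↦ ⟪∇ f x, y - x⟫ + K * t * ‖y - x‖ ^ 2)
    (fun t ht ↦ (hderiv t ht).continuousAt.continuousWithinAt)
    (fun t ht ↦ (hderiv t (Set.Ico_subset_Icc_self ht)).hasDerivWithinAt)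
    (by simp [φ]) (by fun_prop)
    (fun t _ ↦ HasDerivAt.hasDerivWithinAt <| by
      refine (((hasDerivAt_id t).const_mul ⟪∇ f x, y - x⟫).const_add (f x)).add
        ((hasDerivAt_pow 2 t).const_mul (K * ‖y - x‖ ^ 2 / 2)) |>.congr_deriv ?_
      push_cast
      ring)
    (fun t ht ↦ hbound t (Set.Ico_subset_Icc_self ht))
    (Set.right_mem_Icc.2 zero_le_one)
  simp only [φ, AffineMap.lineMap_apply_one] at hcompare
  linarith

/-- The Łojasiewicz gradient inequality for `f` on `s` near the level `b`. -/
def LojasiewiczOn (f : E → ℝ) (s : Set E) (b : ℝ) : Prop :=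
  ∃ δ μ M : ℝ, 0 < δ ∧ 1 < μ ∧ ∀ x ∈ s, |f x - b| ≤ δ → |f x - b| ≤ M * ‖∇ f x‖ ^ μ

theorem summable_norm_gradient_of_descent {x : ℕ → E} {ε : ℕ → ℝ} {c K : ℝ} (hc : 0 < c)
    (hK : 0 ≤ K) (hε : ∀ j, 0 < ε j) (hanti : Antitone ε) (hsum : Summable ε)
    (hxs : ∀ j, x j ∈ s) (hbdd : BddBelow (f '' s))
    (hLoj : ∀ b ∈ closure (f '' s), LojasiewiczOn f s b)
    (hdesc : ∀ j, f (x (j + 1)) ≤ f (x j) - c * ‖∇ f (x j)‖ ^ 2 + K * ε j ^ 2) :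
    Summable fun j ↦ ‖∇ f (x j)‖ := by
  have hfx : ∀ j, f (x j) ∈ f '' s := fun j ↦ ⟨x j, hxs j, rfl⟩
  obtain ⟨b, hb⟩ : ∃ b, Tendsto (fun j ↦ f (x j)) atTop (𝓝 b) :=
    exists_tendsto_of_le_add_summable
      (fun j ↦ (hdesc j).trans (by linarith [mul_nonneg hc.le (sq_nonneg ‖∇ f (x j)‖)]))
      ((summable_sq_of_antitone (fun j ↦ (hε j).le) hanti hsum).mul_left K)
      (hbdd.mono (Set.range_subset_iff.2 hfx))
  obtain ⟨δ, μ, M, hδ, hμ, hM⟩ := hLoj b (mem_closure_of_tendsto hb (Eventually.of_forall hfx))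
  obtain ⟨J, hJ⟩ := eventually_atTop.1 (Metric.tendsto_nhds.1 hb δ hδ)
  rw [← summable_nat_add_iff J]
  refine summable_of_lojasiewicz_descent (v := fun j ↦ f (x (j + J)) - b)
    (ε := fun j ↦ ε (j + J)) (M := max M 0) hc hK (le_max_right _ _) hμ (fun j ↦ hε _)
    (fun i j hij ↦ hanti (Nat.add_le_add_right hij J)) ((summable_nat_add_iff J).2 hsum)
    (fun j ↦ norm_nonneg _) ?_ (fun j ↦ ?_) (fun j ↦ ?_)
  · rw [tendsto_sub_nhds_zero_iff]
    exact (tendsto_add_atTop_iff_nat J).2 hb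
  · rw [add_right_comm]
    linarith [hdesc (j + J)]
  · calc f (x (j + J)) - b ≤ |f (x (j + J)) - b| := le_abs_self _
      _ ≤ M * ‖∇ f (x (j + J))‖ ^ μ := hM _ (hxs _) (hJ _ (Nat.le_add_left J j)).le
      _ ≤ max M 0 * ‖∇ f (x (j + J))‖ ^ μ := by gcongr; exact le_max_left _ _

/-- Gradient descent on `f` with step sizes `α`, where `ξ n` is the error made in evaluating
`∇ f (θ n)`. -/
def IsNoisyGradientDescent (f : E → ℝ) (α : ℕ → ℝ) (θ ξ : ℕ → E) : Prop :=
  ∀ n, θ (n + 1) = θ n - α n • (∇ f (θ n) + ξ n)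

namespace IsNoisyGradientDescent

variable {α : ℕ → ℝ} {θ ξ : ℕ → E} {K : ℝ≥0} {n m : ℕ} {ε : ℝ}

theorem sub_add_smul_eq (h : IsNoisyGradientDescent f α θ ξ) (hnm : n ≤ m) (v : E) :
    θ m - θ n + (∑ i ∈ Finset.Ico n m, α i) • v =
      -(∑ i ∈ Finset.Ico n m, α i • (∇ f (θ i) - v)) - ∑ i ∈ Finset.Ico n m, α i • ξ i := by
  induction m, hnm using Nat.le_induction with
  | base => simp
  | succ m hnm ih =>
    simp only [Finset.sum_Ico_succ_top hnm, add_smul]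
    calc θ (m + 1) - θ n + ((∑ i ∈ Finset.Ico n m, α i) • v + α m • v)
        = (θ m - θ n + (∑ i ∈ Finset.Ico n m, α i) • v)
          - α m • (∇ f (θ m) - v) - α m • ξ m := by rw [h m]; module
      _ = _ := by rw [ih]; module

section Block

variable (h : IsNoisyGradientDescent f α θ ξ) (hα : ∀ i, 0 ≤ α i)
  (hK : LipschitzOnWith K (∇ f) s) (hθ : ∀ i, θ i ∈ s)
include h hα hK hθ

theorem norm_sub_add_smul_gradient_le {D : ℝ} (hnm : n ≤ m)
    (hD : ∀ i ∈ Finset.Ico n m, ‖θ i - θ n‖ ≤ D)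
    (hξ : ‖∑ i ∈ Finset.Ico n m, α i • ξ i‖ ≤ ε) :
    ‖θ m - θ n + (∑ i ∈ Finset.Ico n m, α i) • ∇ f (θ n)‖ ≤
      (∑ i ∈ Finset.Ico n m, α i) * (K * D) + ε := by
  rw [h.sub_add_smul_eq hnm, Finset.sum_mul]
  refine norm_sub_le_of_le ?_ hξ
  rw [norm_neg]
  refine norm_sum_le_of_le _ fun i hi ↦ ?_
  rw [norm_smul, Real.norm_of_nonneg (hα i)]
  have hlip : ‖∇ f (θ i) - ∇ f (θ n)‖ ≤ K * D :=
    (hK.norm_sub_le (hθ i) (hθ n)).trans (mul_le_mul_of_nonneg_left (hD i hi) K.2)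
  exact mul_le_mul_of_nonneg_left hlip (hα i)

theorem norm_sub_le_two_mul {T : ℝ} (hT : ∑ i ∈ Finset.Ico n m, α i ≤ T) (hTK : T * K ≤ 1 / 2)
    (hξ : ∀ k ∈ Set.Icc n m, ‖∑ i ∈ Finset.Ico n k, α i • ξ i‖ ≤ ε) :
    ∀ k ∈ Set.Icc n m, ‖θ k - θ n‖ ≤ 2 * (T * ‖∇ f (θ n)‖ + ε) := by
  intro k
  induction k using Nat.strong_induction_on with
  | _ k ih =>
    intro hk
    set Tk := ∑ i ∈ Finset.Ico n k, α i
    have hTk₀ : 0 ≤ Tk := Finset.sum_nonneg fun i _ ↦ hα i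
    have hTk : Tk ≤ T := le_trans (Finset.sum_le_sum_of_subset_of_nonneg
      (Finset.Ico_subset_Ico_right hk.2) fun i _ _ ↦ hα i) hT
    have hT₀ : 0 ≤ T := hTk₀.trans hTk
    have hε : 0 ≤ ε := (norm_nonneg _).trans (hξ k hk)
    have herr := h.norm_sub_add_smul_gradient_le hα hK hθ hk.1 (fun i hi ↦
      ih i (Finset.mem_Ico.1 hi).2 ⟨(Finset.mem_Ico.1 hi).1, (Finset.mem_Ico.1 hi).2.le.trans hk.2⟩)
      (hξ k hk)
    calc ‖θ k - θ n‖
        = ‖(θ k - θ n + Tk • ∇ f (θ n)) - Tk • ∇ f (θ n)‖ := by rw [add_sub_cancel_right]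
      _ ≤ Tk * (K * (2 * (T * ‖∇ f (θ n)‖ + ε))) + ε + Tk * ‖∇ f (θ n)‖ :=
        norm_sub_le_of_le herr (by rw [norm_smul, Real.norm_of_nonneg hTk₀])
      _ ≤ T * (K * (2 * (T * ‖∇ f (θ n)‖ + ε))) + ε + T * ‖∇ f (θ n)‖ := by gcongr
      _ = T * K * (2 * (T * ‖∇ f (θ n)‖ + ε)) + (T * ‖∇ f (θ n)‖ + ε) := by ring
      _ ≤ 1 / 2 * (2 * (T * ‖∇ f (θ n)‖ + ε)) + (T * ‖∇ f (θ n)‖ + ε) := by gcongr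
      _ = 2 * (T * ‖∇ f (θ n)‖ + ε) := by ring

theorem inner_gradient_sub_le {T : ℝ} (hnm : n ≤ m)
    (hT : ∑ i ∈ Finset.Ico n m, α i = T) (hTK : T * K ≤ 1 / 16)
    (hξ : ∀ k ∈ Set.Icc n m, ‖∑ i ∈ Finset.Ico n k, α i • ξ i‖ ≤ ε) :
    ⟪∇ f (θ n), θ m - θ n⟫ ≤
      -T * ‖∇ f (θ n)‖ ^ 2 + ‖∇ f (θ n)‖ * (1 / 8 * (T * ‖∇ f (θ n)‖ + ε) + ε) := by
  have hdisp := h.norm_sub_le_two_mul hα hK hθ hT.le (by linarith) hξ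
  have herr := h.norm_sub_add_smul_gradient_le hα hK hθ hnm
    (fun i hi ↦ hdisp i ⟨(Finset.mem_Ico.1 hi).1, (Finset.mem_Ico.1 hi).2.le⟩)
    (hξ m ⟨hnm, le_rfl⟩)
  have hT₀ : 0 ≤ T := hT ▸ Finset.sum_nonneg fun i _ ↦ hα i
  have hε : 0 ≤ ε := (norm_nonneg _).trans (hξ m ⟨hnm, le_rfl⟩)
  rw [hT] at herr
  set g := ‖∇ f (θ n)‖
  have hg₀ : 0 ≤ g := norm_nonneg _
  calc ⟪∇ f (θ n), θ m - θ n⟫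
      = ⟪∇ f (θ n), θ m - θ n + T • ∇ f (θ n)⟫ - T * g ^ 2 := by
        rw [inner_add_right, inner_smul_right, real_inner_self_eq_norm_sq, add_sub_cancel_right]
    _ ≤ g * (T * (K * (2 * (T * g + ε))) + ε) - T * g ^ 2 := by
        gcongr
        exact (real_inner_le_norm _ _).trans (mul_le_mul_of_nonneg_left herr hg₀)
    _ = -T * g ^ 2 + g * (T * K * (2 * (T * g + ε)) + ε) := by ring
    _ ≤ -T * g ^ 2 + g * (1 / 16 * (2 * (T * g + ε)) + ε) := by gcongr
    _ = -T * g ^ 2 + g * (1 / 8 * (T * g + ε) + ε) := by ring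

theorem apply_le_sub_mul_norm_gradient_sq_add {T : ℝ} (hs : Convex ℝ s)
    (hf : ∀ z ∈ s, DifferentiableAt ℝ f z) (hnm : n ≤ m)
    (hT : ∑ i ∈ Finset.Ico n m, α i = T) (hT₀ : 0 < T) (hTK : T * K ≤ 1 / 16)
    (hξ : ∀ k ∈ Set.Icc n m, ‖∑ i ∈ Finset.Ico n k, α i • ξ i‖ ≤ ε) :
    f (θ m) ≤ f (θ n) - T / 4 * ‖∇ f (θ n)‖ ^ 2 + 2 / T * ε ^ 2 := by
  have hdescent := le_add_inner_gradient_add_of_lipschitzOnWith hs hf hK (hθ n) (hθ m)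
  have hinner := h.inner_gradient_sub_le hα hK hθ hnm hT hTK hξ
  have hdisp := h.norm_sub_le_two_mul hα hK hθ hT.le (by linarith) hξ m ⟨hnm, le_rfl⟩
  set g := ‖∇ f (θ n)‖
  have hquad : K / 2 * ‖θ m - θ n‖ ^ 2 ≤ 1 / 4 * (T * g ^ 2 + ε ^ 2 / T) := calc
    K / 2 * ‖θ m - θ n‖ ^ 2 ≤ K / 2 * (2 * (T * g + ε)) ^ 2 := by gcongr
    _ ≤ K / 2 * (8 * (T ^ 2 * g ^ 2 + ε ^ 2)) := by
      gcongr
      linarith [sq_nonneg (T * g - ε)]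
    _ = T * K * (4 * (T * g ^ 2 + ε ^ 2 / T)) := by field_simp; ring
    _ ≤ 1 / 16 * (4 * (T * g ^ 2 + ε ^ 2 / T)) := by gcongr
    _ = 1 / 4 * (T * g ^ 2 + ε ^ 2 / T) := by ring
  have hyoung : g * ε ≤ 1 / 4 * (T * g ^ 2) + ε ^ 2 / T := by
    rw [← sub_nonneg, show 1 / 4 * (T * g ^ 2) + ε ^ 2 / T - g * ε = (T * g / 2 - ε) ^ 2 / T by
      field_simp; ring]
    positivity
  have : 0 ≤ T * g ^ 2 := by positivity
  have : 0 ≤ ε ^ 2 / T := by positivity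
  rw [div_mul_eq_mul_div 2 T, mul_div_assoc]
  linarith

end Block

theorem exists_tendsto_gradient_eq_zero_of_block_noise_le {ν : ℕ → ℕ} {τ : ℝ} {ε : ℕ → ℝ}
    (h : IsNoisyGradientDescent f α θ ξ) (hα : ∀ i, 0 ≤ α i) (hs : Convex ℝ s)
    (hsc : IsClosed s) (hbdd : BddBelow (f '' s)) (hf : ∀ z ∈ s, DifferentiableAt ℝ f z)
    (hK : LipschitzOnWith K (∇ f) s) (hLoj : ∀ b ∈ closure (f '' s), LojasiewiczOn f s b)
    (hθ : ∀ i, θ i ∈ s) (hν : StrictMono ν) (hτ : 0 < τ) (hτK : τ * K ≤ 1 / 16)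
    (hblock : ∀ j, ∑ i ∈ Finset.Ico (ν j) (ν (j + 1)), α i ∈ Set.Icc (τ / 2) τ)
    (hε : ∀ j, 0 < ε j) (hanti : Antitone ε) (hsum : Summable ε)
    (hξ : ∀ j, ∀ k ∈ Set.Icc (ν j) (ν (j + 1)), ‖∑ i ∈ Finset.Ico (ν j) k, α i • ξ i‖ ≤ ε j) :
    ∃ x, Tendsto θ atTop (𝓝 x) ∧ ∇ f x = 0 := by
  have hdesc : ∀ j, f (θ (ν (j + 1))) ≤
      f (θ (ν j)) - τ / 8 * ‖∇ f (θ (ν j))‖ ^ 2 + 4 / τ * ε j ^ 2 := fun j ↦ by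
    set T := ∑ i ∈ Finset.Ico (ν j) (ν (j + 1)), α i with hT
    obtain ⟨hτT, hTτ⟩ := hblock j
    calc f (θ (ν (j + 1)))
        ≤ f (θ (ν j)) - T / 4 * ‖∇ f (θ (ν j))‖ ^ 2 + 2 / T * ε j ^ 2 :=
          h.apply_le_sub_mul_norm_gradient_sq_add hα hK hθ hs hf (hν j.lt_succ_self).le
            hT.symm (by linarith) ((mul_le_mul_of_nonneg_right hTτ K.2).trans hτK) (hξ j)
      _ ≤ f (θ (ν j)) - τ / 2 / 4 * ‖∇ f (θ (ν j))‖ ^ 2 + 2 / (τ / 2) * ε j ^ 2 := by gcongr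
      _ = _ := by ring
  have hgrad : Summable fun j ↦ ‖∇ f (θ (ν j))‖ :=
    summable_norm_gradient_of_descent (by positivity) (by positivity) hε hanti hsum
      (fun j ↦ hθ _) hbdd hLoj hdesc
  have hdist : ∀ j, ∀ k ∈ Set.Icc (ν j) (ν (j + 1)),
      dist (θ k) (θ (ν j)) ≤ 2 * (τ * ‖∇ f (θ (ν j))‖ + ε j) := fun j k hk ↦ by
    rw [dist_eq_norm]
    exact h.norm_sub_le_two_mul hα hK hθ (hblock j).2 (by linarith) (hξ j) k hk
  obtain ⟨x, hx⟩ := exists_tendsto_of_summable_block_dist hν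
    (((hgrad.mul_left τ).add hsum).mul_left 2) hdist
  have hxs : x ∈ s := hsc.mem_of_tendsto hx (Eventually.of_forall hθ)
  have hlim : Tendsto (fun j ↦ ∇ f (θ (ν j))) atTop (𝓝 (∇ f x)) :=
    (hK.continuousOn x hxs).tendsto.comp <|
      tendsto_nhdsWithin_iff.2 ⟨hx.comp hν.tendsto_atTop, Eventually.of_forall fun j ↦ hθ _⟩
  exact ⟨x, hx, tendsto_nhds_unique hlim
    (tendsto_zero_iff_norm_tendsto_zero.2 hgrad.tendsto_atTop_zero)⟩

theorem exists_tendsto_gradient_eq_zero_of_weighted_noise_le {γ : ℕ → ℝ} {r C : ℝ}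
    (h : IsNoisyGradientDescent f α θ ξ) (hα : ∀ i, 0 ≤ α i) (hs : Convex ℝ s)
    (hsc : IsClosed s) (hbdd : BddBelow (f '' s)) (hf : ∀ z ∈ s, DifferentiableAt ℝ f z)
    (hK : LipschitzOnWith K (∇ f) s) (hLoj : ∀ b ∈ closure (f '' s), LojasiewiczOn f s b)
    (hθ : ∀ i, θ i ∈ s) (hα₀ : Tendsto α atTop (𝓝 0)) (hγ : ∀ n, γ n = ∑ i ∈ Finset.range n, α i)
    (hγtop : Tendsto γ atTop atTop) (hr : 1 < r) {t : ℝ} (ht : 0 < t)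
    (hξ : ∀ᶠ n in atTop, ∀ m ≥ n, γ m - γ n ≤ t →
      ‖∑ i ∈ Finset.Ico n m, (α i * γ i ^ r) • ξ i‖ ≤ C) :
    ∃ x, Tendsto θ atTop (𝓝 x) ∧ ∇ f x = 0 := by
  have hstep : ∀ n, γ (n + 1) - γ n = α n := fun n ↦ by
    rw [hγ, hγ, Finset.sum_range_succ, add_sub_cancel_left]
  have hmono : Monotone γ := monotone_nat_of_le_succ fun n ↦ sub_nonneg.1 (hstep n ▸ hα n)
  let τ : ℝ := min t (1 / (16 * (K + 1)))
  have hτ : 0 < τ := lt_min ht (by positivity)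
  have hτK : τ * K ≤ 1 / 16 := calc
    τ * K ≤ 1 / (16 * (K + 1)) * (K + 1) := by gcongr; exacts [min_le_right _ _, by simp]
    _ = 1 / 16 := by field_simp
  obtain ⟨ν, ε, hν, hblock, hε, hanti, hsum, hnoise⟩ := exists_strictMono_block_noise_le hmono
    hγtop (by simpa only [hstep] using hα₀) hτ (min_le_left _ _) hr hξ
  refine h.exists_tendsto_gradient_eq_zero_of_block_noise_le hα hs hsc hbdd hf hK hLoj hθ hν hτ hτK
    (fun j ↦ ?_) hε hanti hsum hnoise
  rw [Finset.sum_Ico_eq_sub _ (hν j.lt_succ_self).le, ← hγ, ← hγ]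
  exact hblock j

end IsNoisyGradientDescent

end Hilbert

/-- The argument is pathwise, so `θ` and `ξ` are a single realisation. -/
theorem stochastic_gradient_convergence_general {E : Type*} [NormedAddCommGroup E]
    [InnerProductSpace ℝ E] [CompleteSpace E] {f : E → ℝ} (hf : Differentiable ℝ f)
    (hlip : LocallyLipschitz (∇ f)) {α γ : ℕ → ℝ} {θ ξ : ℕ → E} (hα : ∀ n, 0 ≤ α n)
    (h : IsNoisyGradientDescent f α θ ξ) (hα₀ : Tendsto α atTop (𝓝 0))
    (hγ : ∀ n, γ n = ∑ i ∈ Finset.range n, α i) (hγtop : Tendsto γ atTop atTop)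
    (hθ : ∃ Q, IsCompact Q ∧ ∀ n, θ n ∈ Q) {r t : ℝ} (hr : 1 < r) (ht : 0 < t)
    (hξ : ∃ C, ∀ᶠ n in atTop, ∀ m ≥ n, γ m - γ n ≤ t →
      ‖∑ i ∈ Finset.Ico n m, (α i * γ i ^ r) • ξ i‖ ≤ C)
    (hLoj : ∀ Q, IsCompact Q → ∀ b ∈ f '' Q, LojasiewiczOn f Q b) :
    ∃ x, Tendsto θ atTop (𝓝 x) ∧ ∇ f x = 0 := by
  obtain ⟨Q, hQ, hθQ⟩ := hθ
  obtain ⟨C, hC⟩ := hξ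
  let s := closure (convexHull ℝ Q)
  have hs : IsCompact s :=
    hQ.totallyBounded.convexHull.closure.isCompact_of_isClosed isClosed_closure
  have hfs : IsCompact (f '' s) := hs.image hf.continuous
  obtain ⟨K, hK⟩ := hlip.locallyLipschitzOn.exists_lipschitzOnWith_of_compact hs
  exact h.exists_tendsto_gradient_eq_zero_of_weighted_noise_le hα
    (convex_convexHull ℝ Q).closure isClosed_closure hfs.bddBelow (fun z _ ↦ hf z) hK
    (hfs.isClosed.closure_eq.symm ▸ hLoj s hs)
    (fun n ↦ subset_closure (subset_convexHull ℝ Q (hθQ n))) hα₀ hγ hγtop hr ht hC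

/-- Theorem 1.1 of the paper:
under Assumptions 1.1, 1.2 and 1.3, almost surely on the event
`Λ = {sup_n ‖θ_n‖ < ∞}`, the limit `θ̂ = lim_n θ_n` exists and satisfies
`∇f(θ̂) = 0`. -/
theorem stochastic_gradient_convergence
    {d : ℕ} (hd : 1 ≤ d)
    {Ω : Type} [MeasurableSpace Ω] (P : Measure Ω) [IsProbabilityMeasure P]
    (f : EuclideanSpace ℝ (Fin d) → ℝ)
    (hfd : Differentiable ℝ f)
    (hlip : LocallyLipschitz (fun x => gradient f x))
    (α : ℕ → ℝ) (hαpos : ∀ n, 0 < α n)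
    (θ ξ : ℕ → Ω → EuclideanSpace ℝ (Fin d))
    (hrec : ∀ n ω, θ (n + 1) ω = θ n ω - α n • (gradient f (θ n ω) + ξ n ω))
    -- Assumption 1.1
    (hα0 : Tendsto α atTop (nhds 0))
    (γ : ℕ → ℝ) (hγ : ∀ n, γ n = ∑ i ∈ Finset.range n, α i)
    (hαdiv : Tendsto γ atTop atTop)
    -- the interpolation index `a(n,t)`
    (a : ℕ → ℝ → ℕ)
    (ha : ∀ n t, 0 < t → a n t = sSup {k | n ≤ k ∧ γ k - γ n ≤ t})
    -- the event Λ
    (Λ : Set Ω) (hΛ : Λ = {ω | ∃ C, ∀ n, ‖θ n ω‖ ≤ C})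
    -- Assumption 1.2
    (r : ℝ) (hr : 1 < r)
    (noise : ℕ → Ω → ℝ)
    (hnoise : ∀ n ω, noise n ω =
      ⨆ k ∈ Set.Ico n (a n 1), ‖∑ i ∈ Finset.Icc n k, (α i * γ i ^ r) • ξ i ω‖)
    (hA12 : ∀ᵐ ω ∂P, ω ∈ Λ → IsBoundedUnder (· ≤ ·) atTop (fun n => noise n ω))
    -- Assumption 1.3 (Łojasiewicz-type gradient inequality)
    (hLoj : ∀ Q : Set (EuclideanSpace ℝ (Fin d)), IsCompact Q → ∀ b ∈ f '' Q,
      ∃ δ μ M : ℝ, δ ∈ Set.Ioc (0 : ℝ) 1 ∧ μ ∈ Set.Ioc (1 : ℝ) 2 ∧ 1 ≤ M ∧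
        ∀ x ∈ Q, |f x - b| ≤ δ → |f x - b| ≤ M * ‖gradient f x‖ ^ μ) :
    ∀ᵐ ω ∂P, ω ∈ Λ →
      ∃ θhat, Tendsto (fun n => θ n ω) atTop (nhds θhat) ∧ gradient f θhat = 0 := by
  filter_upwards [hA12] with ω hω hωΛ
  simp only [hnoise, ha _ 1 one_pos] at hω
  obtain ⟨C, hC⟩ : ∃ C, ∀ n, ‖θ n ω‖ ≤ C := by rwa [hΛ] at hωΛ
  exact stochastic_gradient_convergence_general hfd hlip (fun n ↦ (hαpos n).le)
    (fun n ↦ hrec n ω) hα0 hγ hαdiv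
    ⟨_, isCompact_closedBall 0 C, fun n ↦ mem_closedBall_zero_iff.2 (hC n)⟩ hr one_pos
    (exists_eventually_norm_sum_Ico_le hαdiv (hω hωΛ)) fun Q hQ b hb ↦
      let ⟨δ, μ, M, hδ, hμ, _, hM⟩ := hLoj Q hQ b hb
      ⟨δ, μ, M, hδ.1, hμ.1, hM⟩
end

section
/- Under Assumptions 1.1, 1.2 and 1.3, there exists a random variable K̂ with 1 ≤ K̂ < ∞ everywhere such that, almost surely on Λ = {sup_{n≥0} ‖θ_n‖ < ∞} (where θ̂ = lim_n θ_n exists): (1) limsup_{n→∞} γ_n^{p̂} ‖∇f(θ_n)‖² ≤ K̂ (φ(ξ))^{μ̂}; (2) limsup_{n→∞} γ_n^{p̂} |f(θ_n) − f(θ̂)| ≤ K̂ (φ(ξ))^{μ̂}; (3) limsup_{n→∞} γ_n^{q̂} ‖θ_n − θ̂‖ ≤ K̂ φ(ξ), where μ̂ = μ_{θ̂}, p̂ = p_{θ̂}, q̂ = q_{θ̂}, r̂ = r_{θ̂}, and φ(ξ) = ξ if r < r̂, φ(ξ) = 1 + ξ if r = r̂, φ(ξ) = 1 if r > r̂. 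-/
open MeasureTheory Filter

/-!
Group the iteration into windows on which the elapsed time `γ` grows by a fixed small amount.
Summation by parts bounds the accumulated noise of a window by a multiple of `γ ^ (-r)`, so across a
window the objective decreases by a multiple of `‖∇f‖ ^ 2`, up to an error of order `γ ^ (-2 * r)`.
Since `r > 1` these errors are summable and `f (θ n)` converges. With the Łojasiewicz inequality the
descent becomes a difference inequality for the distance of `f (θ n)` to its limit, and comparison
with the barrier `A * γ ^ (-(μ * ρ))`, where `ρ = min {r, 1 / (2 - μ)}`, gives the rate of the
objective and hence of the gradient. The displacements over the remaining windows form a convergent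
series, which gives the limit of the iterates and their rate.
-/

namespace StochasticGradient

open scoped Topology

/-! ### Real powers along a short step -/

section RealPowers

variable {x y p ρ σ b : ℝ}

lemma rpow_add_mul_sub_le_rpow (hx : 0 < x) (hy : 0 < y) (hp : p ≤ 0 ∨ 1 ≤ p) :
    x ^ p + p * x ^ (p - 1) * (y - x) ≤ y ^ p := by
  have hyx : 0 < y / x := div_pos hy hx
  suffices h : 1 + p * (y / x - 1) ≤ (y / x) ^ p by
    calc x ^ p + p * x ^ (p - 1) * (y - x) = x ^ p * (1 + p * (y / x - 1)) := by
          rw [Real.rpow_sub_one hx.ne']; field_simp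
      _ ≤ x ^ p * (y / x) ^ p := by gcongr
      _ = y ^ p := by rw [← Real.mul_rpow hx.le hyx.le, mul_div_cancel₀ _ hx.ne']
  rcases hp with hp | hp
  · calc 1 + p * (y / x - 1) ≤ Real.exp ((y / x - 1) * p) := by
          linarith [Real.add_one_le_exp ((y / x - 1) * p)]
      _ = Real.exp (y / x - 1) ^ p := Real.exp_mul _ _
      _ ≤ (y / x) ^ p :=
          Real.rpow_le_rpow_of_nonpos hyx (by linarith [Real.add_one_le_exp (y / x - 1)]) hp
  · simpa using one_add_mul_self_le_rpow_one_add (s := y / x - 1) (by linarith) hp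

lemma three_quarters_rpow_neg_le (hx : 0 < x) (hpx : 4 * p ≤ x) (hp : 0 ≤ p) (hxy : x ≤ y)
    (hyx : y ≤ x + 1) : 3 / 4 * x ^ (-p) ≤ y ^ (-p) := by
  have htangent := rpow_add_mul_sub_le_rpow hx (hx.trans_le hxy) (.inl (neg_nonpos.2 hp))
  have hdrop : p / x * (y - x) * x ^ (-p) ≤ 1 / 4 * 1 * x ^ (-p) := by
    have : p / x ≤ 1 / 4 := by rw [div_le_iff₀ hx]; linarith
    gcongr; linarith
  rw [Real.rpow_sub_one hx.ne'] at htangent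
  calc 3 / 4 * x ^ (-p) ≤ x ^ (-p) - p / x * (y - x) * x ^ (-p) := by linarith
    _ = x ^ (-p) + -p * (x ^ (-p) / x) * (y - x) := by ring
    _ ≤ y ^ (-p) := htangent

lemma rpow_neg_le_rpow_one_sub_sub (hρ : 1 < ρ) (hx : 4 * ρ ≤ x) (hσ : 0 < σ) (hxy : x + σ ≤ y)
    (hyx : y ≤ x + 1) : x ^ (-ρ) ≤ 2 / ((ρ - 1) * σ) * (x ^ (1 - ρ) - y ^ (1 - ρ)) := by
  have hx0 : 0 < x := by linarith
  have hy0 : 0 < y := by linarith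
  have hden : 0 < (ρ - 1) * σ := mul_pos (by linarith) hσ
  have hpow := three_quarters_rpow_neg_le hx0 hx (by linarith) (by linarith) hyx
  have htangent := rpow_add_mul_sub_le_rpow (p := 1 - ρ) hy0 hx0 (.inl (by linarith))
  rw [sub_sub_cancel_left] at htangent
  rw [div_mul_eq_mul_div, le_div_iff₀ hden]
  calc x ^ (-ρ) * ((ρ - 1) * σ) ≤ 2 * y ^ (-ρ) * ((ρ - 1) * (y - x)) := by
        have : 0 ≤ ρ - 1 := by linarith
        have := Real.rpow_nonneg hx0.le (-ρ)
        gcongr <;> linarith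
    _ ≤ 2 * (x ^ (1 - ρ) - y ^ (1 - ρ)) := by linarith

lemma rpow_mul_sub_le {u v : ℝ} (hρ : 1 ≤ ρ) (hx : 0 < x) (hxy : x ≤ y) (hyx : y ≤ x + 1)
    (hv : v ≤ b ^ 2 * y ^ (1 - 2 * ρ)) :
    x ^ ρ * (u - v) ≤ x ^ ρ * u - y ^ ρ * v + ρ * b ^ 2 * x ^ (-ρ) := by
  have hy : 0 < y := hx.trans_le hxy
  have hincr : y ^ ρ - x ^ ρ ≤ ρ * y ^ (ρ - 1) := by
    have htangent := rpow_add_mul_sub_le_rpow hy hx (.inr hρ)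
    have : ρ * y ^ (ρ - 1) * (y - x) ≤ ρ * y ^ (ρ - 1) * 1 := by
      gcongr; linarith
    linarith
  have hincr0 : 0 ≤ y ^ ρ - x ^ ρ := sub_nonneg.2 (by gcongr)
  have key : (y ^ ρ - x ^ ρ) * v ≤ ρ * b ^ 2 * x ^ (-ρ) := calc
    (y ^ ρ - x ^ ρ) * v ≤ (y ^ ρ - x ^ ρ) * (b ^ 2 * y ^ (1 - 2 * ρ)) := by gcongr
    _ ≤ ρ * y ^ (ρ - 1) * (b ^ 2 * y ^ (1 - 2 * ρ)) := by gcongr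
    _ = ρ * b ^ 2 * (y ^ (ρ - 1) * y ^ (1 - 2 * ρ)) := by ring
    _ = ρ * b ^ 2 * y ^ (-ρ) := by rw [← Real.rpow_add hy]; ring_nf
    _ ≤ ρ * b ^ 2 * x ^ (-ρ) := by
        have := Real.rpow_le_rpow_of_nonpos hx hxy (by linarith : -ρ ≤ 0)
        gcongr
  linarith

lemma sq_rpow_neg_le_rpow_neg {μ : ℝ} (hx : 1 ≤ x) (hμ : μ ≤ 2) (hρ : 0 ≤ ρ) :
    (x ^ (-ρ)) ^ 2 ≤ x ^ (-(μ * ρ)) := by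
  rw [← Real.rpow_mul_natCast (by linarith)]
  exact Real.rpow_le_rpow_of_exponent_le hx (by push_cast; nlinarith)

lemma sq_mul_rpow_neg_le (hρ : 1 < ρ) (hx : 4 * ρ ≤ x) (hσ : 0 < σ) (hxy : x + σ ≤ y)
    (hyx : y ≤ x + 1) :
    (b * x ^ (-ρ)) ^ 2 ≤ b ^ 2 * (2 / ((ρ - 1) * σ)) * (x ^ (1 - ρ) - y ^ (1 - ρ)) := calc
  (b * x ^ (-ρ)) ^ 2 = b ^ 2 * (x ^ (-ρ)) ^ 2 := mul_pow _ _ _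
  _ ≤ b ^ 2 * x ^ (-ρ) := by
      gcongr
      simpa using sq_rpow_neg_le_rpow_neg (x := x) (by linarith) one_le_two (by linarith : 0 ≤ ρ)
  _ ≤ b ^ 2 * (2 / ((ρ - 1) * σ)) * (x ^ (1 - ρ) - y ^ (1 - ρ)) := by
      rw [mul_assoc]
      gcongr
      exact rpow_neg_le_rpow_one_sub_sub hρ hx hσ hxy hyx

lemma eventually_mul_rpow_neg_le {γ : ℕ → ℝ} (hγ : Tendsto γ atTop atTop) {p q A B : ℝ}
    (hpq : p < q) (hB : 0 < B) : ∀ᶠ n in atTop, A * γ n ^ (-q) ≤ B * γ n ^ (-p) := by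
  have hlim : Tendsto (fun n ↦ A * γ n ^ (-(q - p))) atTop (𝓝 0) := by
    simpa using ((tendsto_rpow_neg_atTop (sub_pos.2 hpq)).comp hγ).const_mul A
  filter_upwards [hlim.eventually_le_const hB, hγ.eventually_gt_atTop 0] with n hn hγn
  calc A * γ n ^ (-q) = A * γ n ^ (-(q - p)) * γ n ^ (-p) := by
        rw [mul_assoc, ← Real.rpow_add hγn]; ring_nf
    _ ≤ B * γ n ^ (-p) := by gcongr

end RealPowers

/-! ### Windows -/

section Chains

variable {m : ℕ → ℕ} {P Q : ℕ → Prop} {N : ℕ}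

lemma exists_le_lt_of_invariant (hm : ∀ n ≥ N, n < m n) (hN : P N)
    (hP : ∀ n ≥ N, P n → P (m n)) {k : ℕ} (hk : N ≤ k) :
    ∃ n ≥ N, P n ∧ n ≤ k ∧ k < m n := by
  induction k, hk using Nat.le_induction with
  | base => exact ⟨N, le_rfl, hN, le_rfl, hm N le_rfl⟩
  | succ k _ ih =>
    obtain ⟨n, hn, hPn, hnk, hkm⟩ := ih
    rcases (Nat.succ_le_of_lt hkm).lt_or_eq with h | h
    · exact ⟨n, hn, hPn, hnk.trans k.le_succ, h⟩
    · have hmn : N ≤ m n := hn.trans (hm n hn).le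
      exact ⟨m n, hmn, hP n hn hPn, h.ge, h ▸ hm (m n) hmn⟩

lemma frequently_of_invariant (hm : ∀ n ≥ N, n < m n) (hN : P N)
    (hP : ∀ n ≥ N, P n → P (m n)) : ∃ᶠ n in atTop, P n := by
  rw [frequently_atTop]
  intro k
  obtain ⟨n, hn, hPn, -, hkm⟩ := exists_le_lt_of_invariant hm hN hP (le_max_right k N)
  exact ⟨m n, (le_max_left k N).trans hkm.le, hP n hn hPn⟩

lemma eventually_exists_le_lt_of_frequently (hm : ∀ᶠ n in atTop, n < m n)
    (hPm : ∀ᶠ n in atTop, P n → P (m n)) (hP : ∃ᶠ n in atTop, P n) (hQ : ∀ᶠ n in atTop, Q n) :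
    ∀ᶠ k in atTop, ∃ n, Q n ∧ P n ∧ n ≤ k ∧ k < m n := by
  obtain ⟨N, hN⟩ := eventually_atTop.1 (hm.and (hPm.and hQ))
  obtain ⟨n₀, hPn₀, hn₀⟩ := (hP.and_eventually (eventually_ge_atTop N)).exists
  filter_upwards [eventually_ge_atTop n₀] with k hk
  obtain ⟨n, hn, hPn, hnk⟩ := exists_le_lt_of_invariant (fun n hn ↦ (hN n (hn₀.trans hn)).1) hPn₀
    (fun n hn ↦ (hN n (hn₀.trans hn)).2.1) hk
  exact ⟨n, (hN n (hn₀.trans hn)).2.2, hPn, hnk⟩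

lemma tendsto_liminf_of_descent {V F g e : ℕ → ℝ} {D : ℝ} (hm : ∀ᶠ n in atTop, n < m n)
    (hD : 0 ≤ D) (hg : ∀ n, 0 ≤ g n) (hV : ∀ᶠ n in atTop, V (m n) ≤ V n - g n)
    (hF : ∀ᶠ n in atTop, ∀ k ∈ Set.Icc n (m n), |F k - F n| ≤ D * g n + e n)
    (he : Tendsto e atTop (𝓝 0)) (hFV : Tendsto (fun n ↦ F n - V n) atTop (𝓝 0))
    (hV_le : IsBoundedUnder (· ≤ ·) atTop V) (hV_ge : IsBoundedUnder (· ≥ ·) atTop V) :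
    Tendsto F atTop (𝓝 (liminf V atTop)) := by
  set ℓ := liminf V atTop
  have hm_lim : Tendsto m atTop atTop := tendsto_atTop_mono' _ (hm.mono fun n ↦ le_of_lt) tendsto_id
  rw [Metric.tendsto_nhds]
  intro ε₀ hε₀
  obtain ⟨ε, hε, hεD⟩ : ∃ ε > 0, (2 * D + 4) * ε = ε₀ :=
    ⟨ε₀ / (2 * D + 4), by positivity, by field_simp⟩
  have hV_gt : ∀ᶠ n in atTop, ℓ - ε < V n :=
    eventually_lt_of_lt_liminf (by linarith) hV_ge
  have hV_lt : ∃ᶠ n in atTop, V n < ℓ + ε :=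
    frequently_lt_of_liminf_lt hV_le.isCoboundedUnder_ge (by linarith)
  have hV_lt_map : ∀ᶠ n in atTop, V n < ℓ + ε → V (m n) < ℓ + ε := by
    filter_upwards [hV] with n hn h
    linarith [hg n]
  filter_upwards [eventually_exists_le_lt_of_frequently hm hV_lt_map hV_lt
    (hV.and (hF.and ((hm_lim.eventually hV_gt).and (hV_gt.and ((he.eventually_lt_const hε).and
    (Metric.tendsto_nhds.1 hFV ε hε))))))]
  rintro k ⟨n, ⟨hVn, hFn, hVm, hV_gt_n, hen, hFVn⟩, hV_lt_n, hnk, hkm⟩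
  have hgn : D * g n ≤ D * (2 * ε) := by
    gcongr; linarith
  have hFk := abs_le.1 (hFn k ⟨hnk, hkm.le⟩)
  rw [Real.dist_0_eq_abs, abs_lt] at hFVn
  rw [Real.dist_eq, abs_lt]
  constructor <;> linarith

end Chains

/-- `m` sends every late index `n` to an index `m n` such that the window `[n, m n]` has length
between `σ` and `1` on the time scale `γ`. -/
structure IsWindowMap (γ : ℕ → ℝ) (m : ℕ → ℕ) (σ : ℝ) : Prop where
  monotone : Monotone γ
  tendsto : Tendsto γ atTop atTop
  pos : 0 < σ
  eventually_step : ∀ᶠ n in atTop, γ n + σ ≤ γ (m n) ∧ γ (m n) ≤ γ n + 1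

namespace IsWindowMap

variable {γ : ℕ → ℝ} {m : ℕ → ℕ} {σ : ℝ}

lemma eventually_lt (h : IsWindowMap γ m σ) : ∀ᶠ n in atTop, n < m n :=
  h.eventually_step.mono fun n hn ↦ h.monotone.reflect_lt (by linarith [h.pos, hn.1])

lemma tendsto_map (h : IsWindowMap γ m σ) : Tendsto m atTop atTop :=
  tendsto_atTop_mono' _ (h.eventually_lt.mono fun _ ↦ le_of_lt) tendsto_id

end IsWindowMap

/-- Estimates on the window `[n, m n]` for the objective values `F`, gradient norms `G` and
iterates `θ`, where `e` measures the accumulated noise. -/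
structure WindowEstimate {E : Type*} [SeminormedAddCommGroup E] (c C e : ℝ) (F G : ℕ → ℝ)
    (θ : ℕ → E) (m : ℕ → ℕ) (n : ℕ) : Prop where
  descent : F (m n) ≤ F n - c * G n ^ 2 + C * e ^ 2
  variation : ∀ k ∈ Set.Icc n (m n), |F k - F n| ≤ C * (G n ^ 2 + e ^ 2)
  displacement : ∀ k ∈ Set.Icc n (m n), ‖θ k - θ n‖ ≤ C * (G n + e)

/-! ### Displacement of the iterates -/

section Displacement

variable {c C e σ ρ b x y u v G : ℝ}

lemma add_le_div_of_descent (hc : 0 < c) (he : 0 < e) (h : v ≤ u - c * G ^ 2 + C * e ^ 2) :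
    G + e ≤ (u - v) / (c * e) + (2 + C / c) * e := by
  have hGe : G * e ≤ G ^ 2 + e ^ 2 := by nlinarith [sq_nonneg (G - e), sq_nonneg (G + e)]
  have hcGe : c * (G * e) ≤ c * (G ^ 2 + e ^ 2) := by gcongr
  calc G + e = (c * (G * e) + c * e ^ 2) / (c * e) := by field_simp
    _ ≤ (u - v + (2 * c + C) * e ^ 2) / (c * e) := by
        rw [div_le_div_iff_of_pos_right (mul_pos hc he)]; linarith
    _ = (u - v) / (c * e) + (2 + C / c) * e := by field_simp

/-- Constant in front of the time term of `pathPotential`. -/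
noncomputable def pathConstant (c C σ ρ : ℝ) : ℝ :=
  C * (2 + (C + ρ) / c) * (2 / ((ρ - 1) * σ))

lemma pathConstant_pos (hc : 0 < c) (hC : 0 < C) (hσ : 0 < σ) (hρ : 1 < ρ) :
    0 < pathConstant c C σ ρ := by
  have : 0 < ρ - 1 := by linarith
  have : 0 < ρ := by linarith
  unfold pathConstant
  positivity

/-- Potential at time `x` and relative objective value `u` whose decrease along a window bounds the
displacement of the iterates during that window; `b` is the size of the noise. -/
noncomputable def pathPotential (c C σ ρ b x u : ℝ) : ℝ :=
  C / (c * b) * (x ^ ρ * u) + pathConstant c C σ ρ * b * x ^ (1 - ρ)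

lemma mul_add_le_pathPotential_sub (hc : 0 < c) (hC : 0 < C) (hσ : 0 < σ) (hρ : 1 < ρ) (hb : 0 < b)
    (hx : 4 * ρ ≤ x) (hxy : x + σ ≤ y) (hyx : y ≤ x + 1)
    (hdescent : v ≤ u - c * G ^ 2 + C * (b * x ^ (-ρ)) ^ 2) (hv : v ≤ b ^ 2 * y ^ (1 - 2 * ρ)) :
    C * (G + b * x ^ (-ρ)) ≤ pathPotential c C σ ρ b x u - pathPotential c C σ ρ b y v := by
  have hx0 : 0 < x := by linarith
  have hweighted := rpow_mul_sub_le (u := u) hρ.le hx0 (by linarith) hyx hv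
  calc C * (G + b * x ^ (-ρ))
      ≤ C * ((u - v) / (c * (b * x ^ (-ρ))) + (2 + C / c) * (b * x ^ (-ρ))) := by
        rw [mul_le_mul_iff_right₀ hC]
        exact add_le_div_of_descent hc (by positivity) hdescent
    _ = C / (c * b) * (x ^ ρ * (u - v)) + C * (2 + C / c) * b * x ^ (-ρ) := by
        rw [Real.rpow_neg hx0.le]; field_simp
    _ ≤ C / (c * b) * (x ^ ρ * u - y ^ ρ * v + ρ * b ^ 2 * x ^ (-ρ)) +
          C * (2 + C / c) * b * x ^ (-ρ) := by gcongr
    _ = C / (c * b) * (x ^ ρ * u - y ^ ρ * v) + C * (2 + (C + ρ) / c) * b * x ^ (-ρ) := by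
        field_simp; ring
    _ ≤ C / (c * b) * (x ^ ρ * u - y ^ ρ * v) + C * (2 + (C + ρ) / c) * b *
          (2 / ((ρ - 1) * σ) * (x ^ (1 - ρ) - y ^ (1 - ρ))) := by
        have : 0 < ρ := by linarith
        gcongr; exact rpow_neg_le_rpow_one_sub_sub hρ hx hσ hxy hyx
    _ = pathPotential c C σ ρ b x u - pathPotential c C σ ρ b y v := by
        unfold pathPotential pathConstant; ring

lemma abs_pathPotential_le (hc : 0 < c) (hC : 0 < C) (hσ : 0 < σ) (hρ : 1 < ρ) (hb : 0 < b)
    (hx : 0 < x) (hu : |u| ≤ b ^ 2 * x ^ (1 - 2 * ρ)) :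
    |pathPotential c C σ ρ b x u| ≤ (C / c + pathConstant c C σ ρ) * b * x ^ (1 - ρ) := by
  have hK := pathConstant_pos hc hC hσ hρ
  calc |pathPotential c C σ ρ b x u|
      ≤ |C / (c * b) * (x ^ ρ * u)| + |pathConstant c C σ ρ * b * x ^ (1 - ρ)| := abs_add_le _ _
    _ = C / (c * b) * (x ^ ρ * |u|) + pathConstant c C σ ρ * b * x ^ (1 - ρ) := by
        rw [abs_mul, abs_mul, abs_of_pos (by positivity : 0 < C / (c * b)),
          abs_of_pos (Real.rpow_pos_of_pos hx ρ),
          abs_of_pos (by positivity : 0 < pathConstant c C σ ρ * b * x ^ (1 - ρ))]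
    _ ≤ C / (c * b) * (x ^ ρ * (b ^ 2 * x ^ (1 - 2 * ρ))) +
          pathConstant c C σ ρ * b * x ^ (1 - ρ) := by gcongr
    _ = C / c * b * (x ^ ρ * x ^ (1 - 2 * ρ)) + pathConstant c C σ ρ * b * x ^ (1 - ρ) := by
        field_simp
    _ = (C / c + pathConstant c C σ ρ) * b * x ^ (1 - ρ) := by
        rw [← Real.rpow_add hx]; ring_nf

variable {E : Type*} [SeminormedAddCommGroup E] {θ : ℕ → E} {m : ℕ → ℕ}

lemma eventually_norm_sub_le_of_potential {Φ φ : ℕ → ℝ} (hm : ∀ᶠ n in atTop, n < m n)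
    (hθ : ∀ᶠ n in atTop, ∀ k ∈ Set.Icc n (m n), ‖θ k - θ n‖ ≤ Φ n - Φ (m n))
    (hΦ : ∀ᶠ n in atTop, |Φ n| ≤ φ n) (hφ : ∀ᶠ n in atTop, ∀ k ≥ n, φ k ≤ φ n) :
    ∀ᶠ n in atTop, ∀ k ≥ n, ‖θ k - θ n‖ ≤ 2 * φ n := by
  obtain ⟨N, hN⟩ := eventually_atTop.1 (hm.and (hθ.and (hΦ.and hφ)))
  filter_upwards [eventually_ge_atTop N] with n hn k hk
  have hadd {i j : ℕ} (hi : ‖θ i - θ n‖ ≤ Φ n - Φ i) (hni : n ≤ i) (hj : j ∈ Set.Icc i (m i)) :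
      ‖θ j - θ n‖ ≤ Φ n - Φ (m i) := by
    have := (hN i (hn.trans hni)).2.1 j hj
    have := norm_sub_le_norm_sub_add_norm_sub (θ j) (θ i) (θ n)
    linarith
  obtain ⟨i, hni, hi, hik, hki⟩ := exists_le_lt_of_invariant
    (P := fun i ↦ ‖θ i - θ n‖ ≤ Φ n - Φ i) (fun i hi ↦ (hN i (hn.trans hi)).1) (by simp)
    (fun i hni hi ↦ hadd hi hni ⟨((hN i (hn.trans hni)).1).le, le_rfl⟩) hk
  have hmi : n ≤ m i := hk.trans hki.le
  have hΦn := abs_le.1 (hN n hn).2.2.1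
  have hΦm := abs_le.1 (hN (m i) (hn.trans hmi)).2.2.1
  linarith [hadd hi hni ⟨hik, hki.le⟩, (hN n hn).2.2.2 (m i) hmi]

lemma exists_eventually_norm_sub_le {γ : ℕ → ℝ} (hm : IsWindowMap γ m σ) (hc : 0 < c) (hC : 0 < C)
    (hρ : 1 < ρ) : ∃ K > 0, ∀ (u G : ℕ → ℝ) (θ : ℕ → E) (b : ℝ), 0 < b →
      (∀ᶠ n in atTop, WindowEstimate c C (b * γ n ^ (-ρ)) u G θ m n) →
      (∀ᶠ n in atTop, |u n| ≤ b ^ 2 * γ n ^ (1 - 2 * ρ)) →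
      ∀ᶠ n in atTop, ∀ k ≥ n, ‖θ k - θ n‖ ≤ K * b * γ n ^ (1 - ρ) := by
  have hK := pathConstant_pos hc hC hm.pos hρ
  refine ⟨2 * (C / c + pathConstant c C σ ρ), by positivity, fun u G θ b hb hW hu ↦ ?_⟩
  have hpotential := eventually_norm_sub_le_of_potential (θ := θ) hm.eventually_lt
    (Φ := fun n ↦ pathPotential c C σ ρ b (γ n) (u n))
    (φ := fun n ↦ (C / c + pathConstant c C σ ρ) * b * γ n ^ (1 - ρ))
    (by
      filter_upwards [hW, hm.eventually_step, hm.tendsto_map.eventually hu,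
        hm.tendsto.eventually_ge_atTop (4 * ρ)] with n hWn hstep hun hγn k hk
      exact (hWn.displacement k hk).trans (mul_add_le_pathPotential_sub hc hC hm.pos hρ hb hγn
        hstep.1 hstep.2 hWn.descent (le_of_abs_le hun)))
    (by
      filter_upwards [hu, hm.tendsto.eventually_gt_atTop 0] with n hun hγn
      exact abs_pathPotential_le hc hC hm.pos hρ hb hγn hun)
    (by
      filter_upwards [hm.tendsto.eventually_gt_atTop 0] with n hγn k hk
      have := Real.rpow_le_rpow_of_nonpos hγn (hm.monotone hk) (by linarith : 1 - ρ ≤ 0)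
      gcongr)
  filter_upwards [hpotential] with n hn k hk
  exact (hn k hk).trans_eq (by ring)

end Displacement

/-! ### Convergence of the objective values -/

section Convergence

variable {E : Type*} [SeminormedAddCommGroup E] {θ : ℕ → E} {m : ℕ → ℕ}
  {γ F G : ℕ → ℝ} {c C σ ρ B R : ℝ}

lemma exists_tendsto_of_windowEstimate (hm : IsWindowMap γ m σ) (hc : 0 < c) (hC : 0 < C)
    (hρ : 1 < ρ) (hW : ∀ᶠ n in atTop, WindowEstimate c C (B * γ n ^ (-ρ)) F G θ m n)
    (hF : ∀ n, |F n| ≤ R) : ∃ ℓ, Tendsto F atTop (𝓝 ℓ) := by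
  set A := C * (B ^ 2 * (2 / ((ρ - 1) * σ))) with hA
  set V : ℕ → ℝ := fun n ↦ F n + A * γ n ^ (1 - ρ) with hV
  have hγρ : Tendsto (fun n ↦ γ n ^ (1 - ρ)) atTop (𝓝 0) := by
    simpa [Function.comp_def] using (tendsto_rpow_neg_atTop (sub_pos.2 hρ)).comp hm.tendsto
  have he : Tendsto (fun n ↦ (B * γ n ^ (-ρ)) ^ 2) atTop (𝓝 0) := by
    simpa using (((tendsto_rpow_neg_atTop (by linarith : 0 < ρ)).comp hm.tendsto).const_mul B).pow 2
  have hVF : Tendsto (fun n ↦ V n - F n) atTop (𝓝 0) := by simpa [hV] using hγρ.const_mul A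
  have hdescent : ∀ᶠ n in atTop, V (m n) ≤ V n - c * G n ^ 2 := by
    filter_upwards [hW, hm.eventually_step, hm.tendsto.eventually_ge_atTop (4 * ρ)]
      with n hWn hstep hγn
    have hnoise := mul_le_mul_of_nonneg_left
      (sq_mul_rpow_neg_le (b := B) hρ hγn hm.pos hstep.1 hstep.2) hC.le
    rw [← mul_assoc, ← hA] at hnoise
    linarith [hWn.descent]
  have hV_bdd : IsBoundedUnder (· ≤ ·) atTop fun n ↦ |V n| := by
    refine ⟨1 + R, eventually_map.2 ?_⟩
    filter_upwards [hVF.abs.eventually_le_const (by simp : |(0 : ℝ)| < 1)] with n hn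
    linarith [abs_sub_abs_le_abs_sub (V n) (F n), hF n]
  rw [isBoundedUnder_le_abs] at hV_bdd
  exact ⟨_, tendsto_liminf_of_descent (g := fun n ↦ c * G n ^ 2) (D := C / c)
    (e := fun n ↦ C * (B * γ n ^ (-ρ)) ^ 2) hm.eventually_lt (by positivity)
    (fun n ↦ by positivity) hdescent
    (hW.mono fun n hn k hk ↦ (hn.variation k hk).trans_eq (by field_simp))
    (by simpa using he.const_mul C) (by simpa using hVF.neg) hV_bdd.1 hV_bdd.2⟩

end Convergence

/-! ### Decay of the objective values -/

section Barrier

variable {c C M A B μ ρ x y u v G : ℝ}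

/-- Level from which the coefficient `A` of a barrier `A * x ^ (-(μ * ρ))` is large enough for the
noise `B * x ^ (-ρ)` to be negligible against the gradient, or against the barrier itself. -/
noncomputable def noiseFloor (c C M μ B : ℝ) : ℝ :=
  max (2 * M * (2 * C * B ^ 2 / c) ^ (μ / 2)) (4 * C * B ^ 2)

lemma exists_noiseFloor_le (hμ : 0 < μ) (hA : 0 < A) : ∃ B > 0, noiseFloor c C M μ B ≤ A := by
  have hcont : Continuous (noiseFloor c C M μ) := by
    have : Continuous fun B : ℝ ↦ (2 * C * B ^ 2 / c) ^ (μ / 2) :=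
      Continuous.rpow_const (by fun_prop) fun _ ↦ .inr (by positivity)
    unfold noiseFloor
    fun_prop
  have hzero : noiseFloor c C M μ 0 = 0 := by
    simp [noiseFloor, Real.zero_rpow (by positivity : μ / 2 ≠ 0)]
  have hev : ∀ᶠ B in 𝓝[>] (0 : ℝ), noiseFloor c C M μ B ≤ A :=
    (hcont.tendsto 0).mono_left nhdsWithin_le_nhds |>.eventually_le_const (by rwa [hzero])
  obtain ⟨B, hBA, hB⟩ := (hev.and self_mem_nhdsWithin).exists
  exact ⟨B, hB, hBA⟩

/-- At time `x`, the guaranteed decrease of a value above half the barrier `A * x ^ (-(μ * ρ))`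
outweighs the decrease of the barrier itself. -/
def AbsorbsDrift (c M μ ρ A x : ℝ) : Prop :=
  A * (μ * ρ) * x ^ (-(μ * ρ) - 1) ≤ c / 2 * (A / (2 * M)) ^ (2 / μ) * x ^ (-(2 * ρ))

lemma eventually_absorbsDrift {γ : ℕ → ℝ} (hγ : Tendsto γ atTop atTop) (hc : 0 < c) (hM : 0 < M)
    (hρμ : ρ * (2 - μ) < 1) (hA : 0 < A) : ∀ᶠ n in atTop, AbsorbsDrift c M μ ρ A (γ n) := by
  have h := eventually_mul_rpow_neg_le hγ (p := 2 * ρ) (q := μ * ρ + 1) (A := A * (μ * ρ))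
    (B := c / 2 * (A / (2 * M)) ^ (2 / μ)) (by linarith) (by positivity)
  filter_upwards [h] with n hn
  rwa [AbsorbsDrift, ← neg_add']

lemma eventually_mul_le_mul_rpow {p D : ℝ} (hp : 1 < p) (hB : 0 < B) :
    ∀ᶠ A in atTop, D * A ≤ B * A ^ p := by
  have hlim : Tendsto (fun A : ℝ ↦ B * A ^ (p - 1)) atTop atTop :=
    (tendsto_rpow_atTop (sub_pos.2 hp)).const_mul_atTop hB
  filter_upwards [hlim.eventually_ge_atTop D, eventually_gt_atTop 0] with A hA hA0
  calc D * A ≤ B * A ^ (p - 1) * A := by gcongr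
    _ = B * A ^ p := by rw [Real.rpow_sub_one hA0.ne']; field_simp

lemma exists_forall_absorbsDrift {γ : ℕ → ℝ} (hγ : Tendsto γ atTop atTop) (hc : 0 < c)
    (hM : 0 < M) (hμ : 0 < μ) (hμ_le : μ ≤ 2) (hρμ : ρ * (2 - μ) ≤ 1) :
    ∃ A₁, ∀ᶠ n in atTop, ∀ A ≥ A₁, AbsorbsDrift c M μ ρ A (γ n) := by
  rcases hμ_le.lt_or_eq with hμ_lt | rfl
  · have hp : 1 < 2 / μ := by rwa [lt_div_iff₀ hμ, one_mul]
    obtain ⟨A₁, hA₁⟩ := eventually_atTop.1 ((eventually_mul_le_mul_rpow (D := μ * ρ) hp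
      (by positivity : 0 < c / 2 / (2 * M) ^ (2 / μ))).and (eventually_ge_atTop 0))
    refine ⟨A₁, ?_⟩
    filter_upwards [hγ.eventually_ge_atTop 1] with n hn A hA
    obtain ⟨hdrift, hA0⟩ := hA₁ A hA
    have hpow : γ n ^ (-(μ * ρ) - 1) ≤ γ n ^ (-(2 * ρ)) :=
      Real.rpow_le_rpow_of_exponent_le hn (by linarith)
    calc A * (μ * ρ) * γ n ^ (-(μ * ρ) - 1)
        ≤ c / 2 / (2 * M) ^ (2 / μ) * A ^ (2 / μ) * γ n ^ (-(μ * ρ) - 1) := by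
          rw [mul_comm A]; gcongr
      _ ≤ c / 2 / (2 * M) ^ (2 / μ) * A ^ (2 / μ) * γ n ^ (-(2 * ρ)) := by gcongr
      _ = c / 2 * (A / (2 * M)) ^ (2 / μ) * γ n ^ (-(2 * ρ)) := by
          rw [Real.div_rpow hA0 (by positivity)]; ring
  · refine ⟨0, ?_⟩
    filter_upwards [eventually_mul_rpow_neg_le hγ (p := 2 * ρ) (q := 2 * ρ + 1) (A := 2 * ρ)
      (B := c / 2 / (2 * M)) (by linarith) (by positivity)] with n hn A hA
    calc A * (2 * ρ) * γ n ^ (-(2 * ρ) - 1) = A * (2 * ρ * γ n ^ (-(2 * ρ + 1))) := by ring_nf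
      _ ≤ A * (c / 2 / (2 * M) * γ n ^ (-(2 * ρ))) := by gcongr
      _ = c / 2 * (A / (2 * M)) ^ ((2 : ℝ) / 2) * γ n ^ (-(2 * ρ)) := by
          rw [div_self two_ne_zero, Real.rpow_one]; ring

lemma mul_sq_rpow_neg_le (hC : 0 ≤ C) (hμ : μ ≤ 2) (hρ : 0 ≤ ρ) (hx : 1 ≤ x) :
    C * (B * x ^ (-ρ)) ^ 2 ≤ C * B ^ 2 * x ^ (-(μ * ρ)) := by
  rw [mul_pow, ← mul_assoc]
  gcongr
  exact sq_rpow_neg_le_rpow_neg hx hμ hρ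

lemma noise_le_of_le_abs (hc : 0 < c) (hC : 0 < C) (hM : 0 < M) (hμ : 0 < μ) (hx : 0 < x)
    (hG : 0 ≤ G) (hA : noiseFloor c C M μ B ≤ A) (hloj : |u| ≤ M * G ^ μ)
    (hu : A / 2 * x ^ (-(μ * ρ)) ≤ |u|) : C * (B * x ^ (-ρ)) ^ 2 ≤ c / 2 * G ^ 2 := by
  have hpow : (2 * C * B ^ 2 / c * x ^ (-(2 * ρ))) ^ (μ / 2) ≤ (G ^ 2) ^ (μ / 2) := calc
    (2 * C * B ^ 2 / c * x ^ (-(2 * ρ))) ^ (μ / 2)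
        = (2 * C * B ^ 2 / c) ^ (μ / 2) * x ^ (-(μ * ρ)) := by
          rw [Real.mul_rpow (by positivity) (by positivity), ← Real.rpow_mul hx.le]; ring_nf
    _ ≤ A / (2 * M) * x ^ (-(μ * ρ)) := by
          gcongr
          rw [le_div_iff₀ (by positivity), mul_comm]
          exact (le_max_left _ _).trans hA
    _ = A / 2 * x ^ (-(μ * ρ)) / M := by field_simp
    _ ≤ G ^ μ := by rw [div_le_iff₀' hM]; exact hu.trans hloj
    _ = (G ^ 2) ^ (μ / 2) := by rw [← Real.rpow_natCast_mul hG]; push_cast; ring_nf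
  have hsq := (Real.rpow_le_rpow_iff (by positivity) (by positivity) (by positivity)).1 hpow
  calc C * (B * x ^ (-ρ)) ^ 2 = c / 2 * (2 * C * B ^ 2 / c * x ^ (-(2 * ρ))) := by
        rw [mul_pow, ← Real.rpow_mul_natCast hx.le]; push_cast; field_simp
    _ ≤ c / 2 * G ^ 2 := by gcongr

lemma rpow_mul_le_sq_of_le_abs (hM : 0 < M) (hμ : 0 < μ) (hx : 0 < x) (hG : 0 ≤ G) (hA : 0 ≤ A)
    (hloj : |u| ≤ M * G ^ μ) (hu : A / 2 * x ^ (-(μ * ρ)) ≤ |u|) :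
    (A / (2 * M)) ^ (2 / μ) * x ^ (-(2 * ρ)) ≤ G ^ 2 := calc
  (A / (2 * M)) ^ (2 / μ) * x ^ (-(2 * ρ))
      = (A / 2 * x ^ (-(μ * ρ)) / M) ^ (2 / μ) := by
        rw [show A / 2 * x ^ (-(μ * ρ)) / M = A / (2 * M) * x ^ (-(μ * ρ)) by field_simp,
          Real.mul_rpow (by positivity) (by positivity), ← Real.rpow_mul hx.le]
        congr 2
        field_simp
  _ ≤ (G ^ μ) ^ (2 / μ) := by
        gcongr
        rw [div_le_iff₀' hM]
        exact hu.trans hloj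
  _ = G ^ 2 := by rw [← Real.rpow_mul hG, mul_div_cancel₀ _ hμ.ne', Real.rpow_two]

lemma le_mul_rpow_neg_of_absorbsDrift (hc : 0 < c) (hC : 0 < C) (hM : 0 < M) (hμ : 0 < μ)
    (hμ_le : μ ≤ 2) (hρ : 0 < ρ) (hx : 1 ≤ x) (hx' : 4 * (μ * ρ) ≤ x) (hxy : x ≤ y)
    (hyx : y ≤ x + 1) (hG : 0 ≤ G) (hdescent : v ≤ u - c * G ^ 2 + C * (B * x ^ (-ρ)) ^ 2)
    (hloj : |u| ≤ M * G ^ μ) (hA : 0 < A) (hfloor : noiseFloor c C M μ B ≤ A)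
    (hdrift : AbsorbsDrift c M μ ρ A x) (hu : u ≤ A * x ^ (-(μ * ρ))) :
    v ≤ A * y ^ (-(μ * ρ)) := by
  have hx0 : 0 < x := by linarith
  rcases le_or_gt u (A / 2 * x ^ (-(μ * ρ))) with hsmall | hlarge
  · have hnoise : C * (B * x ^ (-ρ)) ^ 2 ≤ A / 4 * x ^ (-(μ * ρ)) := by
      refine (mul_sq_rpow_neg_le hC.le hμ_le hρ.le hx).trans ?_
      gcongr
      linarith [(le_max_right _ _).trans hfloor]
    have hpow := three_quarters_rpow_neg_le hx0 hx' (by positivity) hxy hyx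
    nlinarith [sq_nonneg G]
  · have habs : A / 2 * x ^ (-(μ * ρ)) ≤ |u| := hlarge.le.trans (le_abs_self u)
    have hnoise := noise_le_of_le_abs hc hC hM hμ hx0 hG hfloor hloj habs
    have hgain := mul_le_mul_of_nonneg_left
      (rpow_mul_le_sq_of_le_abs hM hμ hx0 hG hA.le hloj habs) (half_pos hc).le
    have htangent := mul_le_mul_of_nonneg_left
      (rpow_add_mul_sub_le_rpow hx0 (hx0.trans_le hxy) (p := -(μ * ρ))
        (.inl (neg_nonpos.2 (by positivity)))) hA.le
    have hstep : A * (μ * ρ) * x ^ (-(μ * ρ) - 1) * (y - x) ≤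
        A * (μ * ρ) * x ^ (-(μ * ρ) - 1) * 1 := by
      gcongr; linarith
    unfold AbsorbsDrift at hdrift
    linarith

lemma abs_le_of_window {s t w e : ℝ} (hc : 0 < c) (hC : 0 ≤ C) (hA : 0 < A) (ht : 0 ≤ t)
    (hst : 3 / 4 * s ≤ t) (hdescent : v ≤ u - c * G ^ 2 + e) (he : e ≤ A / 4 * s)
    (hu : u ≤ A * s) (hv : -(A * s) ≤ v) (hvar : |w - u| ≤ C * G ^ 2 + e) (hw : -(A * t) ≤ w) :
    |w| ≤ (2 + 3 * (C / c)) * A * t := by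
  have hAst : A * (3 / 4 * s) ≤ A * t := by gcongr
  have hgain : C * G ^ 2 ≤ 3 * (C / c) * (A * t) := calc
    C * G ^ 2 = C / c * (c * G ^ 2) := by field_simp
    _ ≤ C / c * (3 * (A * t)) :=
        mul_le_mul_of_nonneg_left (by linarith) (by positivity)
    _ = 3 * (C / c) * (A * t) := by ring
  have hAt : 0 ≤ A * t := by positivity
  have hCt : 0 ≤ C / c * (A * t) := by positivity
  rw [abs_le]
  constructor <;> linarith [le_abs_self (w - u)]

end Barrier

/-- Relative objective values `u` and gradient norms `G` which satisfy a Łojasiewicz inequality of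
exponent `μ` and decrease along windows up to noise of order `γ ^ (-ρ)`. -/
structure LojasiewiczDescent (c C M B μ ρ σ : ℝ) (γ u G : ℕ → ℝ) (m : ℕ → ℕ) : Prop where
  isWindowMap : IsWindowMap γ m σ
  c_pos : 0 < c
  C_pos : 0 < C
  M_pos : 0 < M
  μ_pos : 0 < μ
  μ_le_two : μ ≤ 2
  ρ_pos : 0 < ρ
  G_nonneg : ∀ n, 0 ≤ G n
  descent : ∀ᶠ n in atTop, u (m n) ≤ u n - c * G n ^ 2 + C * (B * γ n ^ (-ρ)) ^ 2
  lojasiewicz : ∀ᶠ n in atTop, |u n| ≤ M * G n ^ μ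

namespace LojasiewiczDescent

variable {c C M A B μ ρ σ : ℝ} {γ u G : ℕ → ℝ} {m : ℕ → ℕ}

lemma eventually_descent_of_le_abs (h : LojasiewiczDescent c C M B μ ρ σ γ u G m)
    (hfloor : noiseFloor c C M μ B ≤ A) : ∀ᶠ n in atTop,
      A / 2 * γ n ^ (-(μ * ρ)) ≤ |u n| → u (m n) ≤ u n - c / 2 * G n ^ 2 := by
  filter_upwards [h.descent, h.lojasiewicz, h.isWindowMap.tendsto.eventually_gt_atTop 0]
    with n hdescent hloj hγn hu
  linarith [noise_le_of_le_abs h.c_pos h.C_pos h.M_pos h.μ_pos hγn (h.G_nonneg n) hfloor hloj hu]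

lemma eventually_neg_le (h : LojasiewiczDescent c C M B μ ρ σ γ u G m) (hA : 0 < A)
    (hfloor : noiseFloor c C M μ B ≤ A) (hu : Tendsto u atTop (𝓝 0)) :
    ∀ᶠ n in atTop, -(A * γ n ^ (-(μ * ρ))) ≤ u n := by
  obtain ⟨N, hN⟩ := eventually_atTop.1 ((h.eventually_descent_of_le_abs hfloor).and
    (h.isWindowMap.eventually_lt.and (h.isWindowMap.tendsto.eventually_gt_atTop 0)))
  filter_upwards [eventually_ge_atTop N] with n hn
  by_contra! hlt
  have hpos : 0 < A * γ n ^ (-(μ * ρ)) :=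
    mul_pos hA (Real.rpow_pos_of_pos (hN n hn).2.2 _)
  have hfreq : ∃ᶠ j in atTop, u j < -(A * γ n ^ (-(μ * ρ))) := by
    refine frequently_of_invariant (fun j hj ↦ (hN j (hn.trans hj)).2.1) hlt fun j hj huj ↦ ?_
    have hpow : A * γ j ^ (-(μ * ρ)) ≤ A * γ n ^ (-(μ * ρ)) := by
      have := Real.rpow_le_rpow_of_nonpos (hN n hn).2.2 (h.isWindowMap.monotone hj)
        (neg_nonpos.2 (mul_pos h.μ_pos h.ρ_pos).le)
      gcongr
    have hdescent := (hN j (hn.trans hj)).1 (by linarith [neg_le_abs (u j)])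
    have hgain : 0 ≤ c / 2 * G j ^ 2 := mul_nonneg (half_pos h.c_pos).le (sq_nonneg _)
    linarith
  obtain ⟨j, hj, hj'⟩ := (hfreq.and_eventually (hu.eventually_const_lt (neg_lt_zero.2 hpos))).exists
  exact hj.not_gt hj'

lemma eventually_barrier_step (h : LojasiewiczDescent c C M B μ ρ σ γ u G m) :
    ∀ᶠ n in atTop, ∀ A > 0, noiseFloor c C M μ B ≤ A → AbsorbsDrift c M μ ρ A (γ n) →
      u n ≤ A * γ n ^ (-(μ * ρ)) → u (m n) ≤ A * γ (m n) ^ (-(μ * ρ)) := by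
  filter_upwards [h.descent, h.lojasiewicz, h.isWindowMap.eventually_step,
    h.isWindowMap.tendsto.eventually_ge_atTop 1,
    h.isWindowMap.tendsto.eventually_ge_atTop (4 * (μ * ρ))]
    with n hdescent hloj hstep hγ1 hγ4 A hA hfloor hdrift
  exact le_mul_rpow_neg_of_absorbsDrift h.c_pos h.C_pos h.M_pos h.μ_pos h.μ_le_two h.ρ_pos hγ1 hγ4
    (by linarith [hstep.1, h.isWindowMap.pos]) hstep.2 (h.G_nonneg n) hdescent hloj hA hfloor hdrift

lemma exists_frequently_le (h : LojasiewiczDescent c C M B μ ρ σ γ u G m)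
    (hρμ : ρ * (2 - μ) ≤ 1) :
    ∃ A > 0, noiseFloor c C M μ B ≤ A ∧ (∀ᶠ n in atTop, AbsorbsDrift c M μ ρ A (γ n)) ∧
      ∃ᶠ n in atTop, u n ≤ A * γ n ^ (-(μ * ρ)) := by
  obtain ⟨A₁, hA₁⟩ := exists_forall_absorbsDrift h.isWindowMap.tendsto h.c_pos h.M_pos h.μ_pos
    h.μ_le_two hρμ
  obtain ⟨N, hN⟩ := eventually_atTop.1 (hA₁.and (h.eventually_barrier_step.and
    (h.isWindowMap.eventually_lt.and (h.isWindowMap.tendsto.eventually_gt_atTop 0))))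
  obtain ⟨A, hA⟩ := (eventually_ge_atTop A₁ |>.and <| eventually_gt_atTop 0 |>.and <|
    eventually_ge_atTop (noiseFloor c C M μ B) |>.and <|
    eventually_ge_atTop (u N / γ N ^ (-(μ * ρ)))).exists
  obtain ⟨hA₁A, hA0, hfloor, hstart⟩ := hA
  rw [div_le_iff₀ (Real.rpow_pos_of_pos (hN N le_rfl).2.2.2 _)] at hstart
  exact ⟨A, hA0, hfloor, hA₁.mono fun n hn ↦ hn A hA₁A,
    frequently_of_invariant (fun n hn ↦ (hN n hn).2.2.1) hstart fun n hn ↦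
      (hN n hn).2.1 A hA0 hfloor ((hN n hn).1 A hA₁A)⟩

lemma frequently_le (h : LojasiewiczDescent c C M B μ ρ σ γ u G m) (hρμ : ρ * (2 - μ) < 1)
    (hA : 0 < A) (hfloor : noiseFloor c C M μ B ≤ A) :
    ∃ᶠ n in atTop, u n ≤ A * γ n ^ (-(μ * ρ)) := by
  by_contra hcontra
  rw [not_frequently] at hcontra
  obtain ⟨ρ', hρρ', hρ'μ⟩ : ∃ ρ' > ρ, ρ' * (2 - μ) ≤ 1 :=
    ⟨ρ + (1 - ρ * (2 - μ)) / 2, by linarith, by nlinarith [h.μ_pos, h.μ_le_two]⟩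
  -- Above the barrier the noise is negligible, so the values decay at the faster rate `ρ'`.
  have hnoiseless : LojasiewiczDescent (c / 2) C M 0 μ ρ' σ γ u G m :=
    { h with
      c_pos := half_pos h.c_pos
      ρ_pos := h.ρ_pos.trans hρρ'
      descent := by
        filter_upwards [hcontra, h.eventually_descent_of_le_abs hfloor,
          h.isWindowMap.tendsto.eventually_gt_atTop 0] with n hn hdescent hγn
        have hpos := mul_pos hA (Real.rpow_pos_of_pos hγn (-(μ * ρ)))
        simpa using hdescent (by linarith [le_abs_self (u n)]) }
  obtain ⟨A', -, -, -, hfreq⟩ := hnoiseless.exists_frequently_le hρ'μ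
  have hcompare := eventually_mul_rpow_neg_le h.isWindowMap.tendsto (A := A')
    (mul_lt_mul_of_pos_left hρρ' h.μ_pos) hA
  obtain ⟨n, hn, hn', hn''⟩ := (hfreq.and_eventually (hcompare.and hcontra)).exists
  exact hn'' (hn.trans hn')

lemma eventually_abs_le (h : LojasiewiczDescent c C M B μ ρ σ γ u G m) (hA : 0 < A)
    (hfloor : noiseFloor c C M μ B ≤ A)
    (hdrift : ∀ᶠ n in atTop, AbsorbsDrift c M μ ρ A (γ n))
    (hfreq : ∃ᶠ n in atTop, u n ≤ A * γ n ^ (-(μ * ρ)))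
    (hvar : ∀ᶠ n in atTop, ∀ k ∈ Set.Icc n (m n),
      |u k - u n| ≤ C * (G n ^ 2 + (B * γ n ^ (-ρ)) ^ 2))
    (hu : Tendsto u atTop (𝓝 0)) :
    ∀ᶠ n in atTop, |u n| ≤ (2 + 3 * (C / c)) * A * γ n ^ (-(μ * ρ)) := by
  have hlower := h.eventually_neg_le hA hfloor hu
  have hstep : ∀ᶠ n in atTop, u n ≤ A * γ n ^ (-(μ * ρ)) → u (m n) ≤ A * γ (m n) ^ (-(μ * ρ)) := by
    filter_upwards [h.eventually_barrier_step, hdrift] with n hn hdrift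
    exact hn A hA hfloor hdrift
  have hγ := h.isWindowMap.tendsto
  filter_upwards [hlower, hγ.eventually_gt_atTop 0,
    eventually_exists_le_lt_of_frequently h.isWindowMap.eventually_lt hstep hfreq
      (hvar.and <| h.descent.and <| (h.isWindowMap.tendsto_map.eventually hlower).and <|
      h.isWindowMap.eventually_step.and <| (hγ.eventually_ge_atTop 1).and <|
      hγ.eventually_ge_atTop (4 * (μ * ρ)))]
  rintro k hk hγk ⟨n, ⟨hvar, hdescent, hm, hstep, hγ1, hγ4⟩, hn, hnk, hkm⟩
  have hμρ : 0 < μ * ρ := mul_pos h.μ_pos h.ρ_pos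
  have hnoise : C * (B * γ n ^ (-ρ)) ^ 2 ≤ A / 4 * γ n ^ (-(μ * ρ)) := by
    refine (mul_sq_rpow_neg_le h.C_pos.le h.μ_le_two h.ρ_pos.le hγ1).trans ?_
    gcongr
    linarith [(le_max_right _ _).trans hfloor]
  have hpow_k := three_quarters_rpow_neg_le (by linarith) hγ4 hμρ.le (h.isWindowMap.monotone hnk)
    ((h.isWindowMap.monotone hkm.le).trans hstep.2)
  have hlower_m : -(A * γ n ^ (-(μ * ρ))) ≤ u (m n) := by
    refine le_trans ?_ hm
    have := Real.rpow_le_rpow_of_nonpos (by linarith) (h.isWindowMap.monotone (hnk.trans hkm.le))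
      (neg_nonpos.2 hμρ.le)
    gcongr
  exact abs_le_of_window h.c_pos h.C_pos.le hA (by positivity) hpow_k hdescent hnoise hn hlower_m
    (by simpa only [mul_add] using hvar k ⟨hnk, hkm.le⟩) hk

lemma eventually_sq_le {K : ℝ} (h : LojasiewiczDescent c C M B μ ρ σ γ u G m)
    (hK : 0 ≤ K) (habs : ∀ᶠ n in atTop, |u n| ≤ K * γ n ^ (-(μ * ρ))) :
    ∀ᶠ n in atTop, G n ^ 2 ≤ (2 * K + C * B ^ 2) / c * γ n ^ (-(μ * ρ)) := by
  filter_upwards [habs, h.isWindowMap.tendsto_map.eventually habs, h.descent,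
    h.isWindowMap.eventually_lt, h.isWindowMap.tendsto.eventually_ge_atTop 1]
    with n hn hmn hdescent hlt hγn
  have hpow : γ (m n) ^ (-(μ * ρ)) ≤ γ n ^ (-(μ * ρ)) :=
    Real.rpow_le_rpow_of_nonpos (by linarith) (h.isWindowMap.monotone hlt.le)
      (neg_nonpos.2 (mul_pos h.μ_pos h.ρ_pos).le)
  have hnoise := mul_sq_rpow_neg_le (B := B) h.C_pos.le h.μ_le_two h.ρ_pos.le hγn
  have hKpow : K * γ (m n) ^ (-(μ * ρ)) ≤ K * γ n ^ (-(μ * ρ)) := by gcongr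
  rw [div_mul_eq_mul_div, le_div_iff₀' h.c_pos]
  linarith [le_abs_self (u n), neg_abs_le (u (m n))]

end LojasiewiczDescent

namespace WindowEstimate

variable {E : Type*} [SeminormedAddCommGroup E] {c C e e' : ℝ} {F G : ℕ → ℝ} {θ : ℕ → E}
  {m : ℕ → ℕ} {n : ℕ}

lemma sub_const (h : WindowEstimate c C e F G θ m n) (ℓ : ℝ) :
    WindowEstimate c C e (fun k ↦ F k - ℓ) G θ m n where
  descent := by linarith [h.descent]
  variation k hk := by simpa only [sub_sub_sub_cancel_right] using h.variation k hk
  displacement := h.displacement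

lemma mono (h : WindowEstimate c C e F G θ m n) (hC : 0 ≤ C) (he : 0 ≤ e) (hee' : e ≤ e') :
    WindowEstimate c C e' F G θ m n where
  descent := h.descent.trans (by gcongr)
  variation k hk := (h.variation k hk).trans (by gcongr)
  displacement k hk := (h.displacement k hk).trans (by gcongr)

end WindowEstimate

section Rates

variable {E : Type*} [SeminormedAddCommGroup E] {c C M B μ ρ σ K K' : ℝ} {γ u G : ℕ → ℝ}
  {θ : ℕ → E} {m : ℕ → ℕ}

/-- The relative objective values `u`, the gradient norms `G` and the iterates `θ` obey, with
constant `K`, the rates `γ ^ (-(μ * ρ))`, `γ ^ (-(μ * ρ))` (for the square) and `γ ^ (1 - ρ)`. -/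
def DecaysAtRate (γ u G : ℕ → ℝ) (θ : ℕ → E) (μ ρ K : ℝ) : Prop :=
  ∀ᶠ n in atTop, |u n| ≤ K * γ n ^ (-(μ * ρ)) ∧ G n ^ 2 ≤ K * γ n ^ (-(μ * ρ)) ∧
    ∀ k ≥ n, ‖θ k - θ n‖ ≤ K * γ n ^ (1 - ρ)

lemma exists_decaysAtRate (h : LojasiewiczDescent c C M B μ ρ σ γ u G m) (hB : 0 < B)
    (hρ : 1 < ρ) (hρμ : ρ * (2 - μ) ≤ 1)
    (hW : ∀ᶠ n in atTop, WindowEstimate c C (B * γ n ^ (-ρ)) u G θ m n)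
    (hu : Tendsto u atTop (𝓝 0)) : ∃ K, DecaysAtRate γ u G θ μ ρ K := by
  have hγ := h.isWindowMap.tendsto
  obtain ⟨A, hA, hfloor, hdrift, hfreq⟩ := h.exists_frequently_le hρμ
  have habs := h.eventually_abs_le hA hfloor hdrift hfreq (hW.mono fun n hn ↦ hn.variation) hu
  have hC := h.C_pos
  have hc := h.c_pos
  set K₁ := (2 + 3 * (C / c)) * A
  have hsq := h.eventually_sq_le (by positivity) habs
  obtain ⟨b, hBb, hK₁b⟩ : ∃ b ≥ B, K₁ ≤ b ^ 2 :=
    ⟨max B √K₁, le_max_left _ _, by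
      rw [← Real.sqrt_le_left (by positivity)]; exact le_max_right _ _⟩
  obtain ⟨K, -, hK⟩ :=
    exists_eventually_norm_sub_le (E := E) h.isWindowMap h.c_pos h.C_pos hρ
  have hdisp := hK u G θ b (hB.trans_le hBb)
    (by
      filter_upwards [hW, hγ.eventually_gt_atTop 0] with n hn hγn
      exact hn.mono hC.le (by positivity) (by gcongr))
    (by
      filter_upwards [habs, hγ.eventually_ge_atTop 1] with n hn hγn
      refine hn.trans (mul_le_mul hK₁b ?_ (by positivity) (by positivity))
      exact Real.rpow_le_rpow_of_exponent_le hγn (by linarith))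
  refine ⟨max K₁ (max ((2 * K₁ + C * B ^ 2) / c) (K * b)), ?_⟩
  filter_upwards [habs, hsq, hdisp, hγ.eventually_gt_atTop 0] with n habs hsq hdisp hγn
  refine ⟨habs.trans ?_, hsq.trans ?_, fun k hk ↦ (hdisp k hk).trans ?_⟩ <;> gcongr <;> simp

lemma decaysAtRate_of_forall_pos (h : ∀ B > 0, LojasiewiczDescent c C M B μ ρ σ γ u G m)
    (hρ : 1 < ρ) (hρμ : ρ * (2 - μ) < 1)
    (hW : ∀ B > 0, ∀ᶠ n in atTop, WindowEstimate c C (B * γ n ^ (-ρ)) u G θ m n)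
    (hu : Tendsto u atTop (𝓝 0)) {ε : ℝ} (hε : 0 < ε) : DecaysAtRate γ u G θ μ ρ ε := by
  obtain ⟨hm, hc, hC, hM, hμ, -, -, -, -, -⟩ := h 1 one_pos
  have hγ := hm.tendsto
  set D := 2 + 3 * (C / c)
  have hD : 0 < D := by positivity
  obtain ⟨A, hA, hDA, hDA'⟩ : ∃ A > 0, D * A ≤ ε ∧ (2 * D + 1) * A / c ≤ ε :=
    ⟨min (ε / D) (ε * c / (2 * D + 1)), by positivity,
      (le_div_iff₀' hD).1 (min_le_left _ _), by
        rw [div_le_iff₀ hc, ← le_div_iff₀' (by positivity)]; exact min_le_right _ _⟩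
  obtain ⟨B, hB, hfloor⟩ := exists_noiseFloor_le (c := c) (C := C) (M := M) hμ hA
  have hdescent := h B hB
  have habs := hdescent.eventually_abs_le hA hfloor
    (eventually_absorbsDrift hγ hc hM hρμ hA) (hdescent.frequently_le hρμ hA hfloor)
    ((hW B hB).mono fun n hn ↦ hn.variation) hu
  have hsq := hdescent.eventually_sq_le (by positivity) habs
  obtain ⟨K, hK0, hK⟩ := exists_eventually_norm_sub_le (E := E) hm hc hC hρ
  have hdisp := hK u G θ (ε / K) (by positivity) (hW _ (by positivity))
    (by
      filter_upwards [habs, eventually_mul_rpow_neg_le hγ (p := 2 * ρ - 1) (q := μ * ρ)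
        (A := D * A) (B := (ε / K) ^ 2) (by linarith) (by positivity)] with n hn hcompare
      simpa only [neg_sub] using hn.trans hcompare)
  filter_upwards [habs, hsq, hdisp, hγ.eventually_gt_atTop 0] with n habs hsq hdisp hγn
  refine ⟨habs.trans (by gcongr), hsq.trans ?_, fun k hk ↦ (hdisp k hk).trans_eq ?_⟩
  · have hCB : C * B ^ 2 ≤ A := by
      linarith [(le_max_right _ _).trans hfloor, mul_nonneg hC.le (sq_nonneg B)]
    refine mul_le_mul_of_nonneg_right (le_trans ?_ hDA') (by positivity)
    gcongr
    linarith
  · field_simp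

end Rates

/-! ### Windows of the stochastic gradient iteration -/

lemma exists_map_add_le_le_add {γ : ℕ → ℝ} {a b : ℝ} (hγ : Tendsto γ atTop atTop)
    (hstep : Tendsto (fun n ↦ γ (n + 1) - γ n) atTop (𝓝 0)) (ha : 0 < a) (hab : a < b) :
    ∃ m : ℕ → ℕ, ∀ᶠ n in atTop, γ n + a ≤ γ (m n) ∧ γ (m n) ≤ γ n + b := by
  obtain ⟨N, hN⟩ := eventually_atTop.1 (hstep.eventually_lt_const (sub_pos.2 hab))
  refine Eventually.choice (r := fun n k ↦ γ n + a ≤ γ k ∧ γ k ≤ γ n + b)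
    (eventually_atTop.2 ⟨N, fun n hn ↦ ?_⟩)
  have hexists : ∃ j, γ n + a ≤ γ (n + j) := by
    obtain ⟨k, hk, hnk⟩ := ((hγ.eventually_ge_atTop (γ n + a)).and (eventually_ge_atTop n)).exists
    exact ⟨k - n, by rwa [Nat.add_sub_cancel' hnk]⟩
  classical
  obtain ⟨j, hj⟩ : ∃ j, Nat.find hexists = j + 1 :=
    Nat.exists_eq_succ_of_ne_zero fun h ↦ by
      linarith [(Nat.find_eq_zero hexists).1 h, congrArg γ (Nat.add_zero n)]
  have hbefore := not_le.1 (Nat.find_min hexists (m := j) (by lia))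
  have hafter := Nat.find_spec hexists
  rw [hj] at hafter
  exact ⟨n + (j + 1), hafter, by linarith [hN (n + j) (by lia), congrArg γ (Nat.add_assoc n j 1)]⟩

lemma norm_sum_smul_le_of_antitoneOn {E : Type*} [SeminormedAddCommGroup E] [NormedSpace ℝ E]
    {w : ℕ → ℝ} {y : ℕ → E} {n k : ℕ} {B : ℝ} (hnk : n ≤ k) (hw : AntitoneOn w (Set.Icc n k))
    (hwk : 0 ≤ w k) (hB : ∀ j ∈ Set.Icc n k, ‖∑ i ∈ Finset.Ico n j, y i‖ ≤ B) :
    ‖∑ i ∈ Finset.Ico n k, w i • y i‖ ≤ w n * B := by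
  have hpartial : ∀ j, n ≤ j → j ≤ k →
      ‖∑ i ∈ Finset.Ico n j, w i • y i - w j • ∑ i ∈ Finset.Ico n j, y i‖ ≤ (w n - w j) * B := by
    intro j hj
    induction j, hj using Nat.le_induction with
    | base => simp
    | succ j hj ih =>
      intro hjk
      have hsplit : ∑ i ∈ Finset.Ico n (j + 1), w i • y i
            - w (j + 1) • ∑ i ∈ Finset.Ico n (j + 1), y i
          = (∑ i ∈ Finset.Ico n j, w i • y i - w j • ∑ i ∈ Finset.Ico n j, y i)
            + (w j - w (j + 1)) • ∑ i ∈ Finset.Ico n (j + 1), y i := by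
        rw [Finset.sum_Ico_succ_top hj, Finset.sum_Ico_succ_top hj]
        module
      have hdrop : 0 ≤ w j - w (j + 1) :=
        sub_nonneg.2 (hw ⟨hj, by lia⟩ ⟨by lia, hjk⟩ j.le_succ)
      calc _ ≤ (w n - w j) * B + (w j - w (j + 1)) * B := by
            rw [hsplit]
            refine norm_add_le_of_le (ih (by lia)) ?_
            rw [norm_smul, Real.norm_of_nonneg hdrop]
            exact mul_le_mul_of_nonneg_left (hB _ ⟨by lia, hjk⟩) hdrop
        _ = (w n - w (j + 1)) * B := by ring
  calc ‖∑ i ∈ Finset.Ico n k, w i • y i‖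
      ≤ (w n - w k) * B + w k * B := by
        refine norm_le_norm_sub_add _ (w k • ∑ i ∈ Finset.Ico n k, y i) |>.trans ?_
        gcongr
        · exact hpartial k hnk le_rfl
        · rw [norm_smul, Real.norm_of_nonneg hwk]
          exact mul_le_mul_of_nonneg_left (hB k ⟨hnk, le_rfl⟩) hwk
    _ = w n * B := by ring

section Hilbert

variable {E : Type*} [NormedAddCommGroup E] [InnerProductSpace ℝ E] [CompleteSpace E]
  {f : E → ℝ} {S : Set E} {L : NNReal} {x y : E}

lemma abs_sub_sub_inner_gradient_le (hf : ∀ z ∈ S, DifferentiableAt ℝ f z) (hS : Convex ℝ S)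
    (hL : LipschitzOnWith L (gradient f) S) (hx : x ∈ S) (hy : y ∈ S) :
    |f y - f x - inner ℝ (gradient f x) (y - x)| ≤ L * ‖y - x‖ ^ 2 := by
  have hseg : segment ℝ x y ⊆ S := hS.segment_subset hx hy
  have hgrad : ∀ z ∈ segment ℝ x y, ‖InnerProductSpace.toDual ℝ E (gradient f z)
      - InnerProductSpace.toDual ℝ E (gradient f x)‖ ≤ L * ‖y - x‖ := fun z hz ↦ by
    rw [← map_sub, LinearIsometryEquiv.norm_map]
    refine (hL.norm_sub_le (hseg hz) hx).trans ?_
    gcongr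
    simpa only [dist_eq_norm, norm_sub_rev] using
      (mem_closedBall_iff_norm'.1 ((convex_closedBall x ‖y - x‖).segment_subset
        (Metric.mem_closedBall_self (norm_nonneg _)) (mem_closedBall_iff_norm.2 le_rfl) hz))
  have hmean := (convex_segment x y).norm_image_sub_le_of_norm_hasFDerivWithin_le'
    (fun z hz ↦ (hf z (hseg hz)).hasGradientAt.hasFDerivAt.hasFDerivWithinAt) hgrad
    (left_mem_segment ℝ x y) (right_mem_segment ℝ x y)
  rw [InnerProductSpace.toDual_apply_apply, Real.norm_eq_abs] at hmean
  exact hmean.trans_eq (by ring)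

end Hilbert

/-- The stochastic gradient iteration `θ (n + 1) = θ n - α n • (∇f (θ n) + ξ n)` with step sizes
`α`, gradient errors `ξ` and elapsed times `γ n = α 0 + ⋯ + α (n - 1)`. -/
structure IsGradientDescent {E : Type*} [NormedAddCommGroup E] [InnerProductSpace ℝ E]
    [CompleteSpace E] (f : E → ℝ) (α γ : ℕ → ℝ) (θ ξ : ℕ → E) : Prop where
  step_pos : ∀ n, 0 < α n
  time_eq : ∀ n, γ n = ∑ i ∈ Finset.range n, α i
  rec_eq : ∀ n, θ (n + 1) = θ n - α n • (gradient f (θ n) + ξ n)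

namespace IsGradientDescent

variable {E : Type*} [NormedAddCommGroup E] [InnerProductSpace ℝ E] [CompleteSpace E]
  {f : E → ℝ} {S : Set E} {L : NNReal} {α γ : ℕ → ℝ} {θ ξ : ℕ → E} {n m k : ℕ} {D τ η : ℝ}

lemma time_succ_sub (h : IsGradientDescent f α γ θ ξ) (n : ℕ) : γ (n + 1) - γ n = α n := by
  rw [h.time_eq, h.time_eq, Finset.sum_range_succ, add_sub_cancel_left]

lemma monotone_time (h : IsGradientDescent f α γ θ ξ) : Monotone γ :=
  monotone_nat_of_le_succ fun n ↦ by linarith [h.time_succ_sub n, h.step_pos n]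

lemma sum_step (h : IsGradientDescent f α γ θ ξ) (hnk : n ≤ k) :
    ∑ i ∈ Finset.Ico n k, α i = γ k - γ n := by
  rw [h.time_eq, h.time_eq, Finset.sum_Ico_eq_sub _ hnk]

lemma sub_add_smul_gradient (h : IsGradientDescent f α γ θ ξ) (hnk : n ≤ k) :
    θ k - θ n + (γ k - γ n) • gradient f (θ n) =
      -∑ i ∈ Finset.Ico n k, α i • (gradient f (θ i) - gradient f (θ n))
        - ∑ i ∈ Finset.Ico n k, α i • ξ i := by
  have htelescope : θ k - θ n = -∑ i ∈ Finset.Ico n k, α i • (gradient f (θ i) + ξ i) := by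
    rw [← Finset.sum_Ico_sub θ hnk, ← Finset.sum_neg_distrib]
    exact Finset.sum_congr rfl fun i _ ↦ by rw [h.rec_eq, sub_sub_cancel_left]
  rw [htelescope, ← h.sum_step hnk, Finset.sum_smul]
  simp only [smul_add, smul_sub, Finset.sum_add_distrib, Finset.sum_sub_distrib]
  abel

lemma norm_sub_add_smul_gradient_le (h : IsGradientDescent f α γ θ ξ) (hθ : ∀ i, θ i ∈ S)
    (hL : LipschitzOnWith L (gradient f) S) (hnk : n ≤ k) (hτ : γ k - γ n ≤ τ) (hD : 0 ≤ D)
    (hdisp : ∀ i ∈ Finset.Ico n k, ‖θ i - θ n‖ ≤ D)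
    (hnoise : ‖∑ i ∈ Finset.Ico n k, α i • ξ i‖ ≤ η) :
    ‖θ k - θ n + (γ k - γ n) • gradient f (θ n)‖ ≤ τ * L * D + η := by
  rw [h.sub_add_smul_gradient hnk]
  refine norm_sub_le_of_le ?_ hnoise
  rw [norm_neg]
  calc ‖∑ i ∈ Finset.Ico n k, α i • (gradient f (θ i) - gradient f (θ n))‖
      ≤ ∑ i ∈ Finset.Ico n k, α i * (L * D) := by
        refine norm_sum_le_of_le _ fun i hi ↦ ?_
        rw [norm_smul, Real.norm_of_nonneg (h.step_pos i).le]
        have := (h.step_pos i).le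
        gcongr
        exact (hL.norm_sub_le (hθ i) (hθ n)).trans (by gcongr; exact hdisp i hi)
    _ = (γ k - γ n) * (L * D) := by rw [← Finset.sum_mul, h.sum_step hnk]
    _ ≤ τ * L * D := by rw [mul_assoc]; gcongr

lemma norm_sub_le_of_window (h : IsGradientDescent f α γ θ ξ) (hθ : ∀ i, θ i ∈ S)
    (hL : LipschitzOnWith L (gradient f) S) (hLτ : τ * L ≤ 1 / 2) (hτ : 0 ≤ τ) (hη : 0 ≤ η)
    (hm : γ m - γ n ≤ τ) (hnoise : ∀ k ∈ Set.Icc n m, ‖∑ i ∈ Finset.Ico n k, α i • ξ i‖ ≤ η) :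
    ∀ k ∈ Set.Icc n m, ‖θ k - θ n‖ ≤ 2 * (τ * ‖gradient f (θ n)‖ + η) := by
  intro k
  set D := 2 * (τ * ‖gradient f (θ n)‖ + η) with hD
  have hD0 : 0 ≤ D := by positivity
  induction k using Nat.strong_induction_on with
  | _ k ih =>
    rintro ⟨hnk, hkm⟩
    have hkτ : γ k - γ n ≤ τ := by linarith [h.monotone_time hkm]
    have herror := h.norm_sub_add_smul_gradient_le hθ hL hnk hkτ hD0
      (fun i hi ↦ ih i (Finset.mem_Ico.1 hi).2
        ⟨(Finset.mem_Ico.1 hi).1, (Finset.mem_Ico.1 hi).2.le.trans hkm⟩) (hnoise k ⟨hnk, hkm⟩)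
    have hdrift : ‖(γ k - γ n) • gradient f (θ n)‖ ≤ τ * ‖gradient f (θ n)‖ := by
      rw [norm_smul, Real.norm_of_nonneg (sub_nonneg.2 (h.monotone_time hnk))]
      gcongr
    calc ‖θ k - θ n‖
        = ‖θ k - θ n + (γ k - γ n) • gradient f (θ n) - (γ k - γ n) • gradient f (θ n)‖ := by
          rw [add_sub_cancel_right]
      _ ≤ τ * L * D + η + τ * ‖gradient f (θ n)‖ := norm_sub_le_of_le herror hdrift
      _ ≤ 1 / 2 * D + η + τ * ‖gradient f (θ n)‖ := by gcongr
      _ = D := by rw [hD]; ring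

end IsGradientDescent

section WindowInequalities

variable {L τ η G : ℝ}

lemma mul_sq_displacement_le (hL : 0 ≤ L) :
    L * (2 * (τ * G + η)) ^ 2 ≤ 8 * (L * τ) * τ * G ^ 2 + 8 * L * η ^ 2 := by
  have := mul_nonneg hL (sq_nonneg (τ * G - η))
  linarith

lemma window_descent_le (hL : 0 ≤ L) (hτ : 0 < τ) (hLτ : 40 * (L * τ) ≤ 1) (hG : 0 ≤ G)
    (hη : 0 ≤ η) :
    G * (τ * L * (2 * (τ * G + η)) + η) - τ / 2 * G ^ 2 + L * (2 * (τ * G + η)) ^ 2 ≤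
      -(τ / 8 * G ^ 2) + (8 / τ + 8 * L + 3) * η ^ 2 := by
  have hcross : 2 * (G * η) ≤ τ / 8 * G ^ 2 + 8 / τ * η ^ 2 := by
    have : τ / 8 * G ^ 2 + 8 / τ * η ^ 2 - 2 * (G * η) = 1 / (8 * τ) * (τ * G - 8 * η) ^ 2 := by
      field_simp
      ring
    linarith [show 0 ≤ 1 / (8 * τ) * (τ * G - 8 * η) ^ 2 by positivity]
  have hG_sq : 40 * (L * τ) * (τ * G ^ 2) ≤ 1 * (τ * G ^ 2) := by gcongr
  have hGη : 40 * (L * τ) * (G * η) ≤ 1 * (G * η) := by gcongr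
  have hGη0 : 0 ≤ G * η := by positivity
  linarith [mul_sq_displacement_le (τ := τ) (η := η) (G := G) hL, sq_nonneg η]

lemma window_variation_le (hL : 0 ≤ L) (hτ : 0 < τ) (hτ1 : τ ≤ 1) :
    G * (2 * (τ * G + η)) + L * (2 * (τ * G + η)) ^ 2 ≤
      (8 / τ + 8 * L + 3) * (G ^ 2 + η ^ 2) := by
  have hG_sq : τ * G ^ 2 ≤ 1 * G ^ 2 := by gcongr
  have hLG_sq : 8 * L * (τ * τ) * G ^ 2 ≤ 8 * L * (1 * 1) * G ^ 2 := by gcongr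
  have hconst : 0 ≤ 8 / τ * (G ^ 2 + η ^ 2) := by positivity
  linarith [mul_sq_displacement_le (τ := τ) (η := η) (G := G) hL, sq_nonneg η, sq_nonneg (G - η)]

lemma window_displacement_le (hL : 0 ≤ L) (hτ : 0 < τ) (hτ1 : τ ≤ 1) (hG : 0 ≤ G)
    (hη : 0 ≤ η) : 2 * (τ * G + η) ≤ (8 / τ + 8 * L + 3) * (G + η) := by
  have hτG : τ * G ≤ 1 * G := by gcongr
  have hconst : 0 ≤ (8 / τ + 8 * L) * (G + η) := by positivity
  linarith

variable {E : Type*} [SeminormedAddCommGroup E] [InnerProductSpace ℝ E] {g v : E} {a s ε : ℝ}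

lemma inner_le_of_norm_add_smul_le (has : a ≤ s) (hε : ‖v + s • g‖ ≤ ε) :
    inner ℝ g v ≤ ‖g‖ * ε - a * ‖g‖ ^ 2 := calc
  inner ℝ g v = inner ℝ g (v + s • g) - s * ‖g‖ ^ 2 := by
    rw [inner_add_right, inner_smul_right, real_inner_self_eq_norm_sq, add_sub_cancel_right]
  _ ≤ ‖g‖ * ε - a * ‖g‖ ^ 2 := by
    gcongr
    exact (real_inner_le_norm _ _).trans (by gcongr)

lemma abs_le_add_of_abs_sub_inner_le (hε : |a - inner ℝ g v| ≤ ε) : |a| ≤ ε + ‖g‖ * ‖v‖ := by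
  have := abs_add_le (a - inner ℝ g v) (inner ℝ g v)
  rw [sub_add_cancel] at this
  linarith [abs_real_inner_le_norm g v]

end WindowInequalities

namespace IsGradientDescent

variable {E : Type*} [NormedAddCommGroup E] [InnerProductSpace ℝ E] [CompleteSpace E]
  {f : E → ℝ} {S : Set E} {L : NNReal} {α γ : ℕ → ℝ} {θ ξ : ℕ → E} {n m k : ℕ} {B r τ η : ℝ}

lemma windowEstimate (h : IsGradientDescent f α γ θ ξ) (hf : Differentiable ℝ f)
    (hS : Convex ℝ S) (hθ : ∀ i, θ i ∈ S) (hL : LipschitzOnWith L (gradient f) S)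
    (hτ : 0 < τ) (hτ1 : τ ≤ 1) (hLτ : 40 * (L * τ) ≤ 1) (hη : 0 ≤ η) {m : ℕ → ℕ}
    (hm : γ n + τ / 2 ≤ γ (m n)) (hm' : γ (m n) ≤ γ n + τ)
    (hnoise : ∀ k ∈ Set.Icc n (m n), ‖∑ i ∈ Finset.Ico n k, α i • ξ i‖ ≤ η) :
    WindowEstimate (τ / 8) (8 / τ + 8 * L + 3) η (fun k ↦ f (θ k)) (fun k ↦ ‖gradient f (θ k)‖)
      θ m n := by
  set g := gradient f (θ n)
  set D := 2 * (τ * ‖g‖ + η)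
  have hD0 : 0 ≤ D := by positivity
  have hdisp : ∀ k ∈ Set.Icc n (m n), ‖θ k - θ n‖ ≤ D :=
    h.norm_sub_le_of_window hθ hL (by linarith) hτ.le hη (by linarith) hnoise
  have htaylor k := abs_sub_sub_inner_gradient_le (fun z _ ↦ hf z) hS hL (hθ n) (hθ k)
  have hsq : ∀ k ∈ Set.Icc n (m n), L * ‖θ k - θ n‖ ^ 2 ≤ L * D ^ 2 := fun k hk ↦ by
    have := hdisp k hk
    gcongr
  refine ⟨?_, fun k hk ↦ ?_, fun k hk ↦ (hdisp k hk).trans ?_⟩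
  · have hnm : n ≤ m n := (h.monotone_time.reflect_lt (by linarith)).le
    have herror := h.norm_sub_add_smul_gradient_le hθ hL hnm (by linarith : _ ≤ τ) hD0
      (fun i hi ↦ hdisp i ⟨(Finset.mem_Ico.1 hi).1, (Finset.mem_Ico.1 hi).2.le⟩)
      (hnoise _ ⟨hnm, le_rfl⟩)
    have hinner := inner_le_of_norm_add_smul_le (le_sub_iff_add_le'.2 hm) herror
    linarith [le_of_abs_le (htaylor (m n)), hsq _ ⟨hnm, le_rfl⟩,
      window_descent_le L.coe_nonneg hτ hLτ (norm_nonneg g) hη]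
  · have hmul : ‖g‖ * ‖θ k - θ n‖ ≤ ‖g‖ * D := by
      gcongr
      exact hdisp k hk
    linarith [abs_le_add_of_abs_sub_inner_le ((htaylor k).trans (hsq k hk)),
      window_variation_le (G := ‖g‖) (η := η) L.coe_nonneg hτ hτ1]
  · exact window_displacement_le L.coe_nonneg hτ hτ1 (norm_nonneg g) hη

lemma norm_sum_noise_le (h : IsGradientDescent f α γ θ ξ) (hr : 0 ≤ r) (hγn : 0 < γ n)
    (hB : 0 ≤ B) (hnoise : ∀ k, n ≤ k → γ (k + 1) - γ n ≤ 1 →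
      ‖∑ i ∈ Finset.Icc n k, (α i * γ i ^ r) • ξ i‖ ≤ B)
    (hnk : n ≤ k) (hk : γ k - γ n ≤ 1) :
    ‖∑ i ∈ Finset.Ico n k, α i • ξ i‖ ≤ B * γ n ^ (-r) := by
  have hγ_pos : ∀ i, n ≤ i → 0 < γ i := fun i hi ↦ hγn.trans_le (h.monotone_time hi)
  have hunweight : ∑ i ∈ Finset.Ico n k, α i • ξ i =
      ∑ i ∈ Finset.Ico n k, γ i ^ (-r) • (α i * γ i ^ r) • ξ i :=
    Finset.sum_congr rfl fun i hi ↦ by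
      have hγi := hγ_pos i (Finset.mem_Ico.1 hi).1
      rw [smul_smul, mul_left_comm, ← Real.rpow_add hγi, neg_add_cancel, Real.rpow_zero, mul_one]
  rw [hunweight, mul_comm]
  refine norm_sum_smul_le_of_antitoneOn hnk (fun i hi j _ hij ↦ ?_)
    (Real.rpow_nonneg (hγ_pos k hnk).le _) fun j hj ↦ ?_
  · exact Real.rpow_le_rpow_of_nonpos (hγ_pos i hi.1) (h.monotone_time hij) (neg_nonpos.2 hr)
  · rcases hj.1.eq_or_lt with rfl | hlt
    · simpa using hB
    · obtain ⟨i, rfl⟩ := Nat.exists_eq_succ_of_ne_zero (Nat.ne_zero_of_lt hlt)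
      rw [Nat.succ_eq_add_one, Finset.Ico_add_one_right_eq_Icc]
      exact hnoise i (Nat.le_of_lt_succ hlt) (by linarith [h.monotone_time hj.2])

end IsGradientDescent

/-! ### Exponents and noise factors -/

/-- The exponent `min {r, 1 / (2 - μ)}`, where `1 / (2 - μ) = ∞` for `μ = 2`: the noise limits the
rate through `r` and the Łojasiewicz exponent limits it through `1 / (2 - μ)`. -/
noncomputable def rateExponent (r μ : ℝ) : ℝ :=
  if μ < 2 then min r (1 / (2 - μ)) else r

/-- The factor `φ`, by which the limiting noise amplitude `s` enters the rates: it vanishes with `s`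
exactly when the noise decides the rate, `r < 1 / (2 - μ)`, where `1 / (2 - μ) = ∞` for `μ = 2`. -/
noncomputable def rateFactor (r μ s : ℝ) : ℝ :=
  if μ = 2 ∨ r < 1 / (2 - μ) then s else if r = 1 / (2 - μ) then 1 + s else 1

section RateExponent

variable {r μ s : ℝ}

lemma rateExponent_le : rateExponent r μ ≤ r := by
  unfold rateExponent
  split_ifs
  exacts [min_le_left _ _, le_rfl]

lemma one_lt_rateExponent (hr : 1 < r) (hμ : 1 < μ) : 1 < rateExponent r μ := by
  unfold rateExponent
  split_ifs with h
  · exact lt_min hr (by rw [one_lt_div (sub_pos.2 h)]; linarith)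
  · exact hr

lemma rateExponent_mul_le_one (hμ : μ ≤ 2) : rateExponent r μ * (2 - μ) ≤ 1 := by
  unfold rateExponent
  split_ifs with h
  · exact (le_div_iff₀ (sub_pos.2 h)).1 (min_le_right _ _)
  · simp [hμ.antisymm (not_lt.1 h)]

lemma rateExponent_mul_lt_one (hμ : μ ≤ 2) (h : μ = 2 ∨ r < 1 / (2 - μ)) :
    rateExponent r μ * (2 - μ) < 1 := by
  rcases hμ.eq_or_lt with rfl | hlt
  · simp
  · have hr := (h.resolve_left hlt.ne)
    exact (lt_div_iff₀ (sub_pos.2 hlt)).1 (rateExponent_le.trans_lt hr)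

lemma rateFactor_nonneg (hs : 0 ≤ s) : 0 ≤ rateFactor r μ s := by
  unfold rateFactor
  split_ifs <;> positivity

lemma eq_zero_of_rateFactor_eq_zero (hs : 0 ≤ s) (h : rateFactor r μ s = 0) :
    s = 0 ∧ (μ = 2 ∨ r < 1 / (2 - μ)) := by
  unfold rateFactor at h
  split_ifs at h with hsub <;> first | exact ⟨h, hsub⟩ | linarith

lemma exists_one_le_forall_of_lt {D : ℝ → Prop} (hD : ∀ ⦃K K'⦄, K ≤ K' → D K → D K') {φ : ℝ}
    (hφ : 0 ≤ φ) (hμ : μ ≠ 0) (hK : ∃ K, D K) (hzero : φ = 0 → ∀ ε > 0, D ε) :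
    ∃ K ≥ 1, ∀ c, K * φ ^ μ < c ∨ K * φ < c → D c := by
  rcases hφ.eq_or_lt with rfl | hφ
  · refine ⟨1, le_rfl, fun c hc ↦ hzero rfl c ?_⟩
    simpa only [Real.zero_rpow hμ, mul_zero, or_self] using hc
  · obtain ⟨K, hK⟩ := hK
    have hφμ : 0 < φ ^ μ := Real.rpow_pos_of_pos hφ μ
    refine ⟨max 1 (max (K / φ ^ μ) (K / φ)), le_max_left _ _, fun c hc ↦ hD ?_ hK⟩
    rcases hc with hc | hc
    · exact ((div_le_iff₀ hφμ).1 ((le_max_left _ _).trans (le_max_right _ _))).trans hc.le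
    · exact ((div_le_iff₀ hφ).1 ((le_max_right _ _).trans (le_max_right _ _))).trans hc.le

end RateExponent

namespace DecaysAtRate

variable {E : Type*} {γ u G : ℕ → ℝ} {θ : ℕ → E} {μ ρ K K' : ℝ}

lemma mono [SeminormedAddCommGroup E] (h : DecaysAtRate γ u G θ μ ρ K)
    (hγ : Tendsto γ atTop atTop) (hK : K ≤ K') : DecaysAtRate γ u G θ μ ρ K' := by
  filter_upwards [h, hγ.eventually_gt_atTop 0] with n hn hγn
  refine ⟨hn.1.trans ?_, hn.2.1.trans ?_, fun k hk ↦ (hn.2.2 k hk).trans ?_⟩ <;> gcongr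

lemma exists_tendsto [SeminormedAddCommGroup E] [CompleteSpace E]
    (h : DecaysAtRate γ u G θ μ ρ K) (hγ : Tendsto γ atTop atTop) (hρ : 1 < ρ) :
    ∃ x, Tendsto θ atTop (𝓝 x) := by
  have hbound : Tendsto (fun n ↦ K * γ n ^ (1 - ρ)) atTop (𝓝 0) := by
    simpa only [neg_sub, mul_zero, Function.comp_def] using
      ((tendsto_rpow_neg_atTop (sub_pos.2 hρ)).comp hγ).const_mul K
  refine cauchySeq_tendsto_of_complete (Metric.cauchySeq_iff'.2 fun ε hε ↦ ?_)
  obtain ⟨N, hN, hNε⟩ := (h.and (hbound.eventually_lt_const hε)).exists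
  exact ⟨N, fun n hn ↦ (dist_eq_norm (θ n) (θ N)).trans_lt ((hN.2.2 n hn).trans_lt hNε)⟩

lemma eventually_rpow_mul_le [SeminormedAddCommGroup E] (h : DecaysAtRate γ u G θ μ ρ K)
    (hγ : Tendsto γ atTop atTop) {x : E} (hθ : Tendsto θ atTop (𝓝 x)) :
    ∀ᶠ n in atTop, γ n ^ (μ * ρ) * |u n| ≤ K ∧ γ n ^ (μ * ρ) * G n ^ 2 ≤ K ∧
      γ n ^ (ρ - 1) * ‖θ n - x‖ ≤ K := by
  filter_upwards [h, hγ.eventually_gt_atTop 0] with n ⟨hu, hG, hdisp⟩ hγn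
  have hlim : ‖θ n - x‖ ≤ K * γ n ^ (-(ρ - 1)) := by
    rw [norm_sub_rev, neg_sub]
    exact le_of_tendsto (hθ.sub_const _).norm (eventually_atTop.2 ⟨n, hdisp⟩)
  have hmul {s X : ℝ} (hX : X ≤ K * γ n ^ (-s)) : γ n ^ s * X ≤ K := by
    rwa [Real.rpow_neg hγn.le, ← div_eq_mul_inv, le_div_iff₀' (by positivity)] at hX
  exact ⟨hmul hu, hmul hG, hmul hlim⟩

end DecaysAtRate

/-- The bounds `limsup (γ ^ p * G ^ 2) ≤ A`, `limsup (γ ^ p * |u|) ≤ A` and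
`limsup (γ ^ q * ‖θ - x‖) ≤ B`, where `limsup v ≤ A` is expressed as: for every `c > A`,
eventually `v n ≤ c`. -/
def HasRateBounds {E : Type*} [SeminormedAddCommGroup E] (γ u G : ℕ → ℝ) (θ : ℕ → E) (x : E)
    (p q A B : ℝ) : Prop :=
  (∀ c, A < c → ∀ᶠ n in atTop, γ n ^ p * G n ^ 2 ≤ c) ∧
  (∀ c, A < c → ∀ᶠ n in atTop, γ n ^ p * |u n| ≤ c) ∧
  (∀ c, B < c → ∀ᶠ n in atTop, γ n ^ q * ‖θ n - x‖ ≤ c)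

lemma hasRateBounds_of_decaysAtRate {E : Type*} [SeminormedAddCommGroup E] {γ u G : ℕ → ℝ}
    {θ : ℕ → E} {x : E} {μ ρ A B : ℝ} (hγ : Tendsto γ atTop atTop) (hθ : Tendsto θ atTop (𝓝 x))
    (h : ∀ c, A < c ∨ B < c → DecaysAtRate γ u G θ μ ρ c) :
    HasRateBounds γ u G θ x (μ * ρ) (ρ - 1) A B := by
  have hbounds c hc := (h c hc).eventually_rpow_mul_le hγ hθ
  exact ⟨fun c hc ↦ (hbounds c (.inl hc)).mono fun _ hn ↦ hn.2.1,
    fun c hc ↦ (hbounds c (.inl hc)).mono fun _ hn ↦ hn.1,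
    fun c hc ↦ (hbounds c (.inr hc)).mono fun _ hn ↦ hn.2.2⟩

/-! ### Rates of the stochastic gradient iteration -/

/-- From some index `n` on, the sums of the errors `ξ` weighted by `α i * γ i ^ r` over time spans
of length at most `1` have norm at most `B`. -/
def NoiseBound {E : Type*} [NormedAddCommGroup E] [NormedSpace ℝ E] (α γ : ℕ → ℝ) (ξ : ℕ → E)
    (r B : ℝ) : Prop :=
  ∀ᶠ n in atTop, ∀ k, n ≤ k → γ (k + 1) - γ n ≤ 1 →
    ‖∑ i ∈ Finset.Icc n k, (α i * γ i ^ r) • ξ i‖ ≤ B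

/-- The largest norm of a sum of the errors `ξ`, weighted by `α i * γ i ^ r`, which starts at
index `n` and extends over a time span of length at most `1`. -/
noncomputable def noiseAmplitude {E : Type*} [NormedAddCommGroup E] [NormedSpace ℝ E]
    (α γ : ℕ → ℝ) (ξ : ℕ → E) (r : ℝ) (n : ℕ) : ℝ :=
  ⨆ k ∈ Set.Ico n (sSup {k | n ≤ k ∧ γ k - γ n ≤ 1}),
    ‖∑ i ∈ Finset.Icc n k, (α i * γ i ^ r) • ξ i‖

section Noise

lemma le_biSup_Ico (u : ℕ → ℝ) {n k N : ℕ} (hk : k ∈ Set.Ico n N) :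
    u k ≤ ⨆ j ∈ Set.Ico n N, u j := by
  refine le_ciSup₂ (f := fun j (_ : j ∈ Set.Ico n N) ↦ u j)
    (((Set.finite_Ico n N).image u).bddAbove.mono ?_) k hk
  rintro _ ⟨_, ⟨j, rfl⟩, hj, rfl⟩
  exact Set.mem_image_of_mem u hj

variable {E : Type*} [NormedAddCommGroup E] [NormedSpace ℝ E] {α γ : ℕ → ℝ} {ξ : ℕ → E} {r B : ℝ}

lemma norm_sum_le_noiseAmplitude (hγ : Tendsto γ atTop atTop) {n k : ℕ} (hnk : n ≤ k)
    (hk : γ (k + 1) - γ n ≤ 1) :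
    ‖∑ i ∈ Finset.Icc n k, (α i * γ i ^ r) • ξ i‖ ≤ noiseAmplitude α γ ξ r n := by
  have hspan : BddAbove {k | n ≤ k ∧ γ k - γ n ≤ 1} := by
    obtain ⟨N, hN⟩ := eventually_atTop.1 (hγ.eventually_gt_atTop (γ n + 1))
    refine ⟨N, fun j hj ↦ ?_⟩
    by_contra! hNj
    linarith [hN j hNj.le, hj.2]
  exact le_biSup_Ico (fun k ↦ ‖∑ i ∈ Finset.Icc n k, (α i * γ i ^ r) • ξ i‖)
    ⟨hnk, le_csSup hspan ⟨hnk.trans k.le_succ, hk⟩⟩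

lemma noiseBound_of_limsup_lt (hγ : Tendsto γ atTop atTop)
    (hbdd : IsBoundedUnder (· ≤ ·) atTop (noiseAmplitude α γ ξ r))
    (hB : limsup (noiseAmplitude α γ ξ r) atTop < B) : NoiseBound α γ ξ r B :=
  (eventually_lt_of_limsup_lt hB hbdd).mono fun _ hn _ hnk hk ↦
    (norm_sum_le_noiseAmplitude hγ hnk hk).trans hn.le

lemma limsup_noiseAmplitude_nonneg
    (hbdd : IsBoundedUnder (· ≤ ·) atTop (noiseAmplitude α γ ξ r)) :
    0 ≤ limsup (noiseAmplitude α γ ξ r) atTop :=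
  le_limsup_of_frequently_le (Frequently.of_forall fun _ ↦
    Real.iSup_nonneg fun _ ↦ Real.iSup_nonneg fun _ ↦ norm_nonneg _) hbdd

end Noise

/-- Objective values `F`, gradient norms `G` and iterates `θ` obey the window estimates with noise
`B * γ ^ (-r)`, for every `B` above the limiting noise amplitude `X`. -/
structure HasWindowEstimates {E : Type*} [SeminormedAddCommGroup E] (c C σ r X : ℝ)
    (γ F G : ℕ → ℝ) (θ : ℕ → E) (m : ℕ → ℕ) : Prop where
  isWindowMap : IsWindowMap γ m σ
  c_pos : 0 < c
  C_pos : 0 < C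
  G_nonneg : ∀ n, 0 ≤ G n
  X_nonneg : 0 ≤ X
  estimate : ∀ B > X, ∀ᶠ n in atTop, WindowEstimate c C (B * γ n ^ (-r)) F G θ m n

namespace HasWindowEstimates

variable {E : Type*} [SeminormedAddCommGroup E] {c C σ r ρ X B M μ ℓ R : ℝ} {γ F G : ℕ → ℝ}
  {θ : ℕ → E} {m : ℕ → ℕ}

lemma eventually_windowEstimate (h : HasWindowEstimates c C σ r X γ F G θ m) (hB : X < B)
    (hρ : ρ ≤ r) (ℓ : ℝ) :
    ∀ᶠ n in atTop, WindowEstimate c C (B * γ n ^ (-ρ)) (fun k ↦ F k - ℓ) G θ m n := by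
  have hB0 := h.X_nonneg.trans hB.le
  filter_upwards [h.estimate B hB, h.isWindowMap.tendsto.eventually_ge_atTop 1] with n hn hγn
  exact (hn.mono h.C_pos.le (by positivity) (by gcongr)).sub_const ℓ

lemma lojasiewiczDescent (h : HasWindowEstimates c C σ r X γ F G θ m) (hB : X < B)
    (hρ : 0 < ρ) (hρr : ρ ≤ r) (hM : 0 < M) (hμ : 0 < μ) (hμ2 : μ ≤ 2)
    (hloj : ∀ᶠ n in atTop, |F n - ℓ| ≤ M * G n ^ μ) :
    LojasiewiczDescent c C M B μ ρ σ γ (fun n ↦ F n - ℓ) G m where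
  isWindowMap := h.isWindowMap
  c_pos := h.c_pos
  C_pos := h.C_pos
  M_pos := hM
  μ_pos := hμ
  μ_le_two := hμ2
  ρ_pos := hρ
  G_nonneg := h.G_nonneg
  descent := (h.eventually_windowEstimate hB hρr ℓ).mono fun _ hn ↦ hn.descent
  lojasiewicz := hloj

lemma exists_tendsto (h : HasWindowEstimates c C σ r X γ F G θ m) (hr : 1 < r)
    (hF : ∀ n, |F n| ≤ R) : ∃ ℓ, Tendsto F atTop (𝓝 ℓ) :=
  exists_tendsto_of_windowEstimate h.isWindowMap h.c_pos h.C_pos hr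
    (h.estimate (X + 1) (lt_add_one X)) hF

lemma exists_decaysAtRate (h : HasWindowEstimates c C σ r X γ F G θ m) (hr : 1 < r)
    (hF : Tendsto F atTop (𝓝 ℓ)) (hM : 0 < M) (hμ : μ ∈ Set.Ioc 1 2)
    (hloj : ∀ᶠ n in atTop, |F n - ℓ| ≤ M * G n ^ μ) :
    ∃ K, DecaysAtRate γ (fun n ↦ F n - ℓ) G θ μ (rateExponent r μ) K := by
  have hρ := one_lt_rateExponent hr hμ.1
  have hX := lt_add_one X
  exact StochasticGradient.exists_decaysAtRate
    (h.lojasiewiczDescent hX (by linarith) rateExponent_le hM (by linarith [hμ.1]) hμ.2 hloj)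
    (by linarith [h.X_nonneg]) hρ (rateExponent_mul_le_one hμ.2)
    (h.eventually_windowEstimate hX rateExponent_le ℓ) (by simpa using hF.sub_const ℓ)

lemma decaysAtRate_of_pos (h : HasWindowEstimates c C σ r 0 γ F G θ m) (hr : 1 < r)
    (hF : Tendsto F atTop (𝓝 ℓ)) (hM : 0 < M) (hμ : μ ∈ Set.Ioc 1 2)
    (hsub : μ = 2 ∨ r < 1 / (2 - μ)) (hloj : ∀ᶠ n in atTop, |F n - ℓ| ≤ M * G n ^ μ)
    {ε : ℝ} (hε : 0 < ε) :
    DecaysAtRate γ (fun n ↦ F n - ℓ) G θ μ (rateExponent r μ) ε :=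
  have hρ := one_lt_rateExponent hr hμ.1
  decaysAtRate_of_forall_pos
    (fun _ hB ↦ h.lojasiewiczDescent hB (by linarith) rateExponent_le hM (by linarith [hμ.1]) hμ.2
      hloj)
    hρ (rateExponent_mul_lt_one hμ.2 hsub)
    (fun _ hB ↦ h.eventually_windowEstimate hB rateExponent_le ℓ) (by simpa using hF.sub_const ℓ) hε

lemma exists_forall_decaysAtRate (h : HasWindowEstimates c C σ r X γ F G θ m) (hr : 1 < r)
    (hF : Tendsto F atTop (𝓝 ℓ)) (hM : 0 < M) (hμ : μ ∈ Set.Ioc 1 2)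
    (hloj : ∀ᶠ n in atTop, |F n - ℓ| ≤ M * G n ^ μ) :
    ∃ K ≥ 1, ∀ c, K * rateFactor r μ X ^ μ < c ∨ K * rateFactor r μ X < c →
      DecaysAtRate γ (fun n ↦ F n - ℓ) G θ μ (rateExponent r μ) c := by
  refine exists_one_le_forall_of_lt (fun K K' hK hD ↦ hD.mono h.isWindowMap.tendsto hK)
    (rateFactor_nonneg h.X_nonneg) (by linarith [hμ.1]) (h.exists_decaysAtRate hr hF hM hμ hloj)
    fun hzero ε hε ↦ ?_
  obtain ⟨rfl, hsub⟩ := eq_zero_of_rateFactor_eq_zero h.X_nonneg hzero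
  exact h.decaysAtRate_of_pos hr hF hM hμ hsub hloj hε

end HasWindowEstimates

namespace IsGradientDescent

variable {E : Type*} [NormedAddCommGroup E] [InnerProductSpace ℝ E] [CompleteSpace E]
  {f : E → ℝ} {S : Set E} {α γ : ℕ → ℝ} {θ ξ : ℕ → E} {r X : ℝ}

lemma exists_hasWindowEstimates (h : IsGradientDescent f α γ θ ξ) (hf : Differentiable ℝ f)
    (hS : Convex ℝ S) (hθ : ∀ n, θ n ∈ S) {L : NNReal} (hL : LipschitzOnWith L (gradient f) S)
    (hα : Tendsto α atTop (𝓝 0)) (hγ : Tendsto γ atTop atTop) (hr : 0 ≤ r) (hX : 0 ≤ X)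
    (hnoise : ∀ B > X, NoiseBound α γ ξ r B) :
    ∃ c C σ m, HasWindowEstimates c C σ r X γ (fun n ↦ f (θ n)) (fun n ↦ ‖gradient f (θ n)‖) θ
      m := by
  set τ : ℝ := 1 / (40 * (L + 1))
  have hL0 : (0 : ℝ) ≤ L := L.coe_nonneg
  have hτ : 0 < τ := by positivity
  have hLτ : 40 * ((L + 1) * τ) = 1 := by simp only [τ]; field_simp
  have hL_mul := mul_nonneg hL0 hτ.le
  have hτ1 : τ ≤ 1 := by linarith
  obtain ⟨m, hm⟩ := exists_map_add_le_le_add hγ (by simpa only [h.time_succ_sub] using hα)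
    (half_pos hτ) (half_lt_self hτ)
  refine ⟨τ / 8, 8 / τ + 8 * L + 3, τ / 2, m, ⟨h.monotone_time, hγ, by positivity, ?_⟩,
    by positivity, by positivity, fun n ↦ norm_nonneg _, hX, fun B hB ↦ ?_⟩
  · filter_upwards [hm] with n hn
    exact ⟨hn.1, hn.2.trans (by linarith)⟩
  · filter_upwards [hm, hnoise B hB, hγ.eventually_gt_atTop 0] with n hn hnoise hγn
    have hB0 : 0 ≤ B := hX.trans hB.le
    refine h.windowEstimate hf hS hθ hL hτ hτ1 (by linarith) (by positivity) hn.1 hn.2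
      fun k hk ↦ h.norm_sum_noise_le hr hγn hB0 hnoise hk.1 ?_
    linarith [h.monotone_time hk.2, hn.2]

/-- A Łojasiewicz inequality on the compact set `S` makes the iterates converge; the local
inequality at their limit then governs the rates. -/
lemma exists_hasRateBounds (h : IsGradientDescent f α γ θ ξ)
    (hf : Differentiable ℝ f) (hgrad : LocallyLipschitz (gradient f)) (hS : IsCompact S)
    (hθ : ∀ n, θ n ∈ S) (hα : Tendsto α atTop (𝓝 0)) (hγ : Tendsto γ atTop atTop) (hr : 1 < r)
    (hξ : IsBoundedUnder (· ≤ ·) atTop (noiseAmplitude α γ ξ r))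
    (hX : limsup (noiseAmplitude α γ ξ r) atTop = X)
    (hlojS : ∀ b ∈ f '' S, ∃ δ μ M : ℝ, 0 < δ ∧ μ ∈ Set.Ioc 1 2 ∧ 0 < M ∧
      ∀ x ∈ S, |f x - b| ≤ δ → |f x - b| ≤ M * ‖gradient f x‖ ^ μ)
    {μ M : E → ℝ} (hμ : ∀ x, μ x ∈ Set.Ioc 1 2) (hM : ∀ x, 0 < M x)
    (hloj : ∀ x, ∀ᶠ y in 𝓝 x, |f y - f x| ≤ M x * ‖gradient f y‖ ^ μ x) :
    ∃ K ≥ 1, ∃ x, Tendsto θ atTop (𝓝 x) ∧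
      HasRateBounds γ (fun n ↦ f (θ n) - f x) (fun n ↦ ‖gradient f (θ n)‖) θ x
        (μ x * rateExponent r (μ x)) (rateExponent r (μ x) - 1)
        (K * rateFactor r (μ x) X ^ μ x) (K * rateFactor r (μ x) X) := by
  subst hX
  have hhull : IsCompact (closedAbsConvexHull ℝ S) :=
    isCompact_closedAbsConvexHull_of_totallyBounded hS.totallyBounded
  obtain ⟨L, hL⟩ := hgrad.locallyLipschitzOn.exists_lipschitzOnWith_of_compact hhull
  obtain ⟨c, C, σ, m, hW⟩ := h.exists_hasWindowEstimates hf absConvex_convexClosedHull.2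
    (fun n ↦ subset_closedAbsConvexHull (hθ n)) hL hα hγ (by linarith)
    (limsup_noiseAmplitude_nonneg hξ) fun B hB ↦ noiseBound_of_limsup_lt hγ hξ hB
  have hfS : IsCompact (f '' S) := hS.image hf.continuous
  have hfθ n : f (θ n) ∈ f '' S := Set.mem_image_of_mem f (hθ n)
  obtain ⟨R, hR⟩ := hfS.isBounded.exists_norm_le
  obtain ⟨ℓ, hℓ⟩ := hW.exists_tendsto hr (fun n ↦ hR _ (hfθ n))
  have hℓS := hfS.isClosed.mem_of_tendsto hℓ (Eventually.of_forall hfθ)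
  obtain ⟨δ, μS, MS, hδ, hμS, hMS, hlojℓ⟩ := hlojS ℓ hℓS
  obtain ⟨K, hK⟩ := hW.exists_decaysAtRate hr hℓ hMS hμS
    ((hℓ.eventually (Metric.closedBall_mem_nhds ℓ hδ)).mono fun n hn ↦ hlojℓ _ (hθ n) hn)
  obtain ⟨x, hx⟩ := hK.exists_tendsto hγ (one_lt_rateExponent hr hμS.1)
  obtain ⟨K, hK, hrates⟩ := hW.exists_forall_decaysAtRate hr ((hf.continuous.tendsto x).comp hx)
    (hM x) (hμ x) (hx.eventually (hloj x))
  exact ⟨K, hK, x, hx, hasRateBounds_of_decaysAtRate hγ hx hrates⟩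

end IsGradientDescent

lemma exists_forall_norm_le_iff_exists_isCompact {E : Type*} [SeminormedAddCommGroup E]
    [ProperSpace E] {ι : Type*} {u : ι → E} :
    (∃ C, ∀ i, ‖u i‖ ≤ C) ↔ ∃ S, IsCompact S ∧ ∀ i, u i ∈ S := by
  constructor
  · rintro ⟨C, hC⟩
    exact ⟨Metric.closedBall 0 C, isCompact_closedBall 0 C,
      fun i ↦ mem_closedBall_zero_iff.2 (hC i)⟩
  · rintro ⟨S, hS, hu⟩
    obtain ⟨C, hC⟩ := hS.isBounded.exists_norm_le
    exact ⟨C, fun i ↦ hC _ (hu i)⟩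

end StochasticGradient

open StochasticGradient in
theorem stochastic_gradient_convergence_rate_general
    {E : Type*} [NormedAddCommGroup E] [InnerProductSpace ℝ E] [CompleteSpace E]
    {Ω : Type*} [MeasurableSpace Ω] (P : Measure Ω)
    (f : E → ℝ) (hfd : Differentiable ℝ f) (hlip : LocallyLipschitz (gradient f))
    (α : ℕ → ℝ) (hαpos : ∀ n, 0 < α n) (θ ξ : ℕ → Ω → E)
    (hrec : ∀ n ω, θ (n + 1) ω = θ n ω - α n • (gradient f (θ n ω) + ξ n ω))
    (hα0 : Tendsto α atTop (nhds 0))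
    (γ : ℕ → ℝ) (hγ : ∀ n, γ n = ∑ i ∈ Finset.range n, α i) (hαdiv : Tendsto γ atTop atTop)
    (a : ℕ → ℝ → ℕ) (ha : ∀ n t, 0 < t → a n t = sSup {k | n ≤ k ∧ γ k - γ n ≤ t})
    (Λ : Set Ω) (hΛ : Λ = {ω | ∃ S, IsCompact S ∧ ∀ n, θ n ω ∈ S})
    (r : ℝ) (hr : 1 < r) (noise : ℕ → Ω → ℝ)
    (hnoise : ∀ n ω, noise n ω =
      ⨆ k ∈ Set.Ico n (a n 1), ‖∑ i ∈ Finset.Icc n k, (α i * γ i ^ r) • ξ i ω‖)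
    (hA12 : ∀ᵐ ω ∂P, ω ∈ Λ → IsBoundedUnder (· ≤ ·) atTop (fun n => noise n ω))
    (Xi : Ω → ℝ) (hXi : ∀ ω, Xi ω = limsup (fun n => noise n ω) atTop)
    (hLoj : ∀ Q : Set E, IsCompact Q → ∀ b ∈ f '' Q,
      ∃ δ μ M : ℝ, δ ∈ Set.Ioc (0 : ℝ) 1 ∧ μ ∈ Set.Ioc (1 : ℝ) 2 ∧ 1 ≤ M ∧
        ∀ x ∈ Q, |f x - b| ≤ δ → |f x - b| ≤ M * ‖gradient f x‖ ^ μ)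
    (δl μl Ml : E → ℝ) (hδl : ∀ x, δl x ∈ Set.Ioc (0 : ℝ) 1)
    (hμl : ∀ x, μl x ∈ Set.Ioc (1 : ℝ) 2) (hMl : ∀ x, 1 ≤ Ml x)
    (hLocal : ∀ x y, ‖y - x‖ ≤ δl x → |f y - f x| ≤ Ml x * ‖gradient f y‖ ^ μl x)
    (rmin p q : E → ℝ)
    (hrmin : ∀ x, rmin x = if μl x < 2 then min r (1 / (2 - μl x)) else r)
    (hp : ∀ x, p x = μl x * rmin x) (hq : ∀ x, q x = rmin x - 1)
    (phi : E → ℝ → ℝ)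
    (hphi : ∀ x s, phi x s =
      if μl x = 2 ∨ r < 1 / (2 - μl x) then s
      else if r = 1 / (2 - μl x) then 1 + s else 1) :
    ∃ K : Ω → ℝ, (∀ ω, 1 ≤ K ω) ∧
      ∀ᵐ ω ∂P, ω ∈ Λ →
        ∃ θhat, Tendsto (fun n => θ n ω) atTop (nhds θhat) ∧
          (∀ c : ℝ, K ω * phi θhat (Xi ω) ^ μl θhat < c →
            ∀ᶠ n in atTop, γ n ^ p θhat * ‖gradient f (θ n ω)‖ ^ 2 ≤ c) ∧
          (∀ c : ℝ, K ω * phi θhat (Xi ω) ^ μl θhat < c →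
            ∀ᶠ n in atTop, γ n ^ p θhat * |f (θ n ω) - f θhat| ≤ c) ∧
          (∀ c : ℝ, K ω * phi θhat (Xi ω) < c →
            ∀ᶠ n in atTop, γ n ^ q θhat * ‖θ n ω - θhat‖ ≤ c) := by
  obtain rfl : rmin = fun x ↦ rateExponent r (μl x) := funext hrmin
  obtain rfl : p = fun x ↦ μl x * rateExponent r (μl x) := funext hp
  obtain rfl : q = fun x ↦ rateExponent r (μl x) - 1 := funext hq
  obtain rfl : phi = fun x ↦ rateFactor r (μl x) := funext₂ hphi
  have hpath ω : ∃ K ≥ 1, ω ∈ Λ → IsBoundedUnder (· ≤ ·) atTop (noise · ω) →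
      ∃ x, Tendsto (θ · ω) atTop (nhds x) ∧
        HasRateBounds γ (fun n ↦ f (θ n ω) - f x) (fun n ↦ ‖gradient f (θ n ω)‖) (θ · ω) x
          (μl x * rateExponent r (μl x)) (rateExponent r (μl x) - 1)
          (K * rateFactor r (μl x) (Xi ω) ^ μl x) (K * rateFactor r (μl x) (Xi ω)) := by
    by_cases hω : ω ∈ Λ ∧ IsBoundedUnder (· ≤ ·) atTop (noise · ω)
    · obtain ⟨hωΛ, hbdd⟩ := id hω
      obtain ⟨S, hS, hθS⟩ := hΛ ▸ hωΛ
      have hdescent : IsGradientDescent f α γ (θ · ω) (ξ · ω) := ⟨hαpos, hγ, (hrec · ω)⟩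
      have hamplitude : (noise · ω) = noiseAmplitude α γ (ξ · ω) r :=
        funext fun n ↦ by rw [hnoise, ha n 1 one_pos, noiseAmplitude]
      obtain ⟨K, hK, hbounds⟩ := hdescent.exists_hasRateBounds hfd hlip hS hθS hα0 hαdiv hr
        (hamplitude ▸ hbdd) (hamplitude ▸ (hXi ω).symm)
        (fun b hb ↦ by
          obtain ⟨δ, μ, M, hδ, hμ, hM, hloj⟩ := hLoj S hS b hb
          exact ⟨δ, μ, M, hδ.1, hμ, one_pos.trans_le hM, hloj⟩)
        hμl (fun x ↦ one_pos.trans_le (hMl x))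
        fun x ↦ eventually_of_mem (Metric.closedBall_mem_nhds x (hδl x).1)
          fun y hy ↦ hLocal x y (mem_closedBall_iff_norm.1 hy)
      exact ⟨K, hK, fun _ _ ↦ hbounds⟩
    · exact ⟨1, le_rfl, fun hΛ hbdd ↦ absurd ⟨hΛ, hbdd⟩ hω⟩
  choose K hK hbounds using hpath
  exact ⟨K, hK, hA12.mono fun ω hbdd hω ↦ hbounds ω hω (hbdd hω)⟩

/-- Theorem 1.2 of the paper: under Assumptions 1.1, 1.2, 1.3
there is a random variable `K̂` with `1 ≤ K̂ < ∞` everywhere such that, almost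
surely on `Λ` (where `θ̂ = lim θ_n` exists),
`limsup γ_n^p̂ ‖∇f(θ_n)‖² ≤ K̂ (φ(ξ))^μ̂`,
`limsup γ_n^p̂ |f(θ_n) − f(θ̂)| ≤ K̂ (φ(ξ))^μ̂` and
`limsup γ_n^q̂ ‖θ_n − θ̂‖ ≤ K̂ φ(ξ)`.
(`limsup u ≤ c` is expressed as: for every `c' > c`, eventually `u n ≤ c'`.) -/
theorem stochastic_gradient_convergence_rate
    {d : ℕ} (hd : 1 ≤ d)
    {Ω : Type} [MeasurableSpace Ω] (P : Measure Ω) [IsProbabilityMeasure P]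
    (f : EuclideanSpace ℝ (Fin d) → ℝ)
    (hfd : Differentiable ℝ f)
    (hlip : LocallyLipschitz (fun x => gradient f x))
    (α : ℕ → ℝ) (hαpos : ∀ n, 0 < α n)
    (θ ξ : ℕ → Ω → EuclideanSpace ℝ (Fin d))
    (hrec : ∀ n ω, θ (n + 1) ω = θ n ω - α n • (gradient f (θ n ω) + ξ n ω))
    -- Assumption 1.1
    (hα0 : Tendsto α atTop (nhds 0))
    (γ : ℕ → ℝ) (hγ : ∀ n, γ n = ∑ i ∈ Finset.range n, α i)
    (hαdiv : Tendsto γ atTop atTop)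
    -- the interpolation index `a(n,t)`
    (a : ℕ → ℝ → ℕ)
    (ha : ∀ n t, 0 < t → a n t = sSup {k | n ≤ k ∧ γ k - γ n ≤ t})
    -- the event Λ
    (Λ : Set Ω) (hΛ : Λ = {ω | ∃ C, ∀ n, ‖θ n ω‖ ≤ C})
    -- Assumption 1.2
    (r : ℝ) (hr : 1 < r)
    (noise : ℕ → Ω → ℝ)
    (hnoise : ∀ n ω, noise n ω =
      ⨆ k ∈ Set.Ico n (a n 1), ‖∑ i ∈ Finset.Icc n k, (α i * γ i ^ r) • ξ i ω‖)
    (hA12 : ∀ᵐ ω ∂P, ω ∈ Λ → IsBoundedUnder (· ≤ ·) atTop (fun n => noise n ω))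
    (Xi : Ω → ℝ) (hXi : ∀ ω, Xi ω = Filter.limsup (fun n => noise n ω) atTop)
    -- Assumption 1.3 (Łojasiewicz-type gradient inequality)
    (hLoj : ∀ Q : Set (EuclideanSpace ℝ (Fin d)), IsCompact Q → ∀ b ∈ f '' Q,
      ∃ δ μ M : ℝ, δ ∈ Set.Ioc (0 : ℝ) 1 ∧ μ ∈ Set.Ioc (1 : ℝ) 2 ∧ 1 ≤ M ∧
        ∀ x ∈ Q, |f x - b| ≤ δ → |f x - b| ≤ M * ‖gradient f x‖ ^ μ)
    -- the local Łojasiewicz data `δ_θ, μ_θ, M_θ` provided by Assumption 1.3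
    (δl μl Ml : EuclideanSpace ℝ (Fin d) → ℝ)
    (hδl : ∀ x, δl x ∈ Set.Ioc (0 : ℝ) 1)
    (hμl : ∀ x, μl x ∈ Set.Ioc (1 : ℝ) 2)
    (hMl : ∀ x, 1 ≤ Ml x)
    (hLocal : ∀ x y, ‖y - x‖ ≤ δl x → |f y - f x| ≤ Ml x * ‖gradient f y‖ ^ μl x)
    -- `min{r, r_θ}`, `p_θ = μ_θ min{r, r_θ}` and `q_θ = min{r, r_θ} − 1`
    (rmin p q : EuclideanSpace ℝ (Fin d) → ℝ)
    (hrmin : ∀ x, rmin x = if μl x < 2 then min r (1 / (2 - μl x)) else r)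
    (hp : ∀ x, p x = μl x * rmin x)
    (hq : ∀ x, q x = rmin x - 1)
    -- `φ(ξ)`: equals `ξ` if `r < r_θ`, `1 + ξ` if `r = r_θ`, `1` if `r > r_θ`
    (phi : EuclideanSpace ℝ (Fin d) → ℝ → ℝ)
    (hphi : ∀ x s, phi x s =
      if μl x = 2 ∨ r < 1 / (2 - μl x) then s
      else if r = 1 / (2 - μl x) then 1 + s else 1) :
    ∃ K : Ω → ℝ, (∀ ω, 1 ≤ K ω) ∧
      ∀ᵐ ω ∂P, ω ∈ Λ →
        ∃ θhat, Tendsto (fun n => θ n ω) atTop (nhds θhat) ∧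
          (∀ c : ℝ, K ω * phi θhat (Xi ω) ^ μl θhat < c →
            ∀ᶠ n in atTop, γ n ^ p θhat * ‖gradient f (θ n ω)‖ ^ 2 ≤ c) ∧
          (∀ c : ℝ, K ω * phi θhat (Xi ω) ^ μl θhat < c →
            ∀ᶠ n in atTop, γ n ^ p θhat * |f (θ n ω) - f θhat| ≤ c) ∧
          (∀ c : ℝ, K ω * phi θhat (Xi ω) < c →
            ∀ᶠ n in atTop, γ n ^ q θhat * ‖θ n ω - θhat‖ ≤ c) :=
  stochastic_gradient_convergence_rate_general P f hfd hlip α hαpos θ ξ hrec hα0 γ hγ hαdiv a ha Λ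
    (by simp only [hΛ, StochasticGradient.exists_forall_norm_le_iff_exists_isCompact]) r hr noise
    hnoise hA12 Xi hXi hLoj δl μl Ml hδl hμl hMl hLocal rmin p q hrmin hp hq phi hphi
end
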